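/- Let τ̄ ∈ ℍⁿ be a G-independent tuple. Then the number of types of tuples τ̄′, realisable in models of Th(j) + StandardFibres, satisfying j′(τ̄′) = j(τ̄), is either finite or exactly 2^{ℵ₀}. -/

import Mathlib

set_option synthInstance.maxHeartbeats 800000
set_option maxHeartbeats 1600000
noncomputable section
open UpperHalfPlane Matrix MatrixGroups Classical

namespace JPaper

/-! ### The group `G = GL₂⁺(ℚ)` modulo scalars and its action on `ℍ` -/

/-- `GL₂⁺(ℚ)`, the group of 2×2 rational matrices with positive determinant. -/
abbrev GL2QPos : Type := Matrix.GLPos (Fin 2) ℚ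

lemma map_mem_glpos (g : GL2QPos) :
    (Matrix.GeneralLinearGroup.map (algebraMap ℚ ℝ) : GL (Fin 2) ℚ →* GL (Fin 2) ℝ) g ∈
      Matrix.GLPos (Fin 2) ℝ := by
  have hg := g.2
  rw [Matrix.mem_glpos] at hg ⊢
  rw [Matrix.GeneralLinearGroup.val_det_apply] at hg ⊢
  show (0:ℝ) < Matrix.det _
  have : ((Matrix.GeneralLinearGroup.map (algebraMap ℚ ℝ) (g : GL (Fin 2) ℚ) :
      GL (Fin 2) ℝ) : Matrix (Fin 2) (Fin 2) ℝ) = ((g : GL (Fin 2) ℚ) :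
      Matrix (Fin 2) (Fin 2) ℚ).map (algebraMap ℚ ℝ) := rfl
  rw [this, ← RingHom.mapMatrix_apply, ← RingHom.map_det]
  simpa using (Rat.cast_pos (K := ℝ)).mpr hg

/-- The homomorphism `GL₂⁺(ℚ) →* GL₂⁺(ℝ)` induced by `ℚ ⊆ ℝ`. -/
def toGLPosR : GL2QPos →* Matrix.GLPos (Fin 2) ℝ :=
  MonoidHom.codRestrict
    ((Matrix.GeneralLinearGroup.map (algebraMap ℚ ℝ)).comp (Matrix.GLPos (Fin 2) ℚ).subtype)
    (Matrix.GLPos (Fin 2) ℝ) (fun g => map_mem_glpos g)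

/-- `G := GL₂⁺(ℚ)ᵃᵈ`, i.e. `GL₂⁺(ℚ)` modulo its centre (the scalar matrices). -/
abbrev GQ : Type := GL2QPos ⧸ Subgroup.center GL2QPos

/-- The action of an element of `G = GL₂⁺(ℚ)` modulo scalars on the upper half plane,
via a choice of representative (the centre acts trivially on `ℍ`, so this recovers the
natural action by Möbius transformations). -/
def gqSmul (g : GQ) (τ : ℍ) : ℍ := toGLPosR g.out • τ

/-- The image of `SL₂(ℤ)` in `GL₂⁺(ℚ)`. -/
def sl2ZtoGLQ (γ : Matrix.SpecialLinearGroup (Fin 2) ℤ) : GL2QPos :=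
  ⟨Matrix.SpecialLinearGroup.toGL
      (Matrix.SpecialLinearGroup.map (Int.castRingHom ℚ) γ), by
    rw [Matrix.mem_glpos, Matrix.GeneralLinearGroup.val_det_apply]
    show (0:ℚ) < Matrix.det _
    have : ((Matrix.SpecialLinearGroup.toGL
        (Matrix.SpecialLinearGroup.map (Int.castRingHom ℚ) γ) : GL (Fin 2) ℚ) :
        Matrix (Fin 2) (Fin 2) ℚ).det = 1 :=
      (Matrix.SpecialLinearGroup.map (Int.castRingHom ℚ) γ).2
    rw [this]; norm_num⟩

/-- The image of `SL₂(ℤ)` in `G = GL₂⁺(ℚ)` modulo scalars. -/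
def sl2ZtoGQ (γ : Matrix.SpecialLinearGroup (Fin 2) ℤ) : GQ :=
  QuotientGroup.mk (sl2ZtoGLQ γ)

/-! ### The modular `j`-function and special points -/

/-- The classical modular `j`-function on the upper half plane, defined via the
Eisenstein series `g₂, g₃` of the lattice `ℤτ + ℤ`. -/
def jFunction (τ : ℍ) : ℂ :=
  let g2 : ℂ := 60 * ∑' p : ℤ × ℤ,
    if p = 0 then 0 else (((p.1 : ℂ) * (τ : ℂ) + (p.2 : ℂ)) ^ 4)⁻¹
  let g3 : ℂ := 140 * ∑' p : ℤ × ℤ,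
    if p = 0 then 0 else (((p.1 : ℂ) * (τ : ℂ) + (p.2 : ℂ)) ^ 6)⁻¹
  1728 * g2 ^ 3 / (g2 ^ 3 - 27 * g3 ^ 2)

/-- A point of `ℍ` is special (a CM point) if it is fixed by some nontrivial element
of `G = GL₂⁺(ℚ)` modulo scalars. -/
def IsSpecial (τ : ℍ) : Prop := ∃ g : GQ, g ≠ 1 ∧ gqSmul g τ = τ

/-- The set of special points of `ℍ`. -/
def SpecialSet : Set ℍ := {τ | IsSpecial τ}

/-- The set `j(S) ⊆ ℂ` of singular moduli, i.e. `j`-values of special points. -/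
def jSpecialValues : Set ℂ := jFunction '' SpecialSet

/-- The subfield `ℚ(j(S))` of `ℂ` generated by the singular moduli. -/
def QjS : Subfield ℂ := Subfield.closure jSpecialValues

/-- An integral matrix is primitive if the gcd of its entries is 1. -/
def IsPrimitiveIntMatrix (A : Matrix (Fin 2) (Fin 2) ℤ) : Prop :=
  Int.gcd (Int.gcd (A 0 0) (A 0 1)) (Int.gcd (A 1 0) (A 1 1)) = 1

/-- `G_N`: the set of elements of `G` which, after multiplying through by an integer to
clear denominators in all entries, have determinant `N`. -/
def GQdet (N : ℕ) : Set GQ :=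
  {g | ∃ A : Matrix (Fin 2) (Fin 2) ℤ, IsPrimitiveIntMatrix A ∧ A.det = (N : ℤ) ∧
    ∃ c : ℚ, ((g.out : GL (Fin 2) ℚ) : Matrix (Fin 2) (Fin 2) ℚ) =
      c • A.map (fun x => (x : ℚ))}

/-- The `N`-th classical modular polynomial `Φ_N ∈ ℤ[X,Y]`, characterised by the property
that `Φ_N(z,w) = 0` iff `z` and `w` are the `j`-invariants of elliptic curves related by a
cyclic `N`-isogeny, i.e. iff `w = j(gτ)`, `z = j(τ)` for some `τ ∈ ℍ` and `g ∈ G_N`. -/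
def modularPoly (N : ℕ) : MvPolynomial (Fin 2) ℤ :=
  if h : ∃ P : MvPolynomial (Fin 2) ℤ, P ≠ 0 ∧ ∀ z w : ℂ,
      (MvPolynomial.aeval ![z, w]) P = 0 ↔
        ∃ (τ : ℍ) (g : GQ), g ∈ GQdet N ∧ jFunction τ = z ∧ jFunction (gqSmul g τ) = w
  then h.choose else 0


/-! ### The two-sorted language of the `j`-function and its models -/

open FirstOrder FirstOrder.Language

/-- Function symbols of the two-sorted language: a unary symbol for every `g ∈ G`,
the map `j`, and the field operations. -/
inductive JFun : ℕ → Type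
  | act (g : GQ) : JFun 1
  | jmap : JFun 1
  | add : JFun 2
  | mul : JFun 2
  | zero : JFun 0
  | one : JFun 0

/-- Relation symbols: a unary predicate distinguishing the `H`-sort. -/
inductive JRel : ℕ → Type
  | isH : JRel 1

/-- The (one-sorted encoding of the) two-sorted language
`⟨⟨H ; {g}_{g ∈ G}⟩, ⟨F,+,·,0,1⟩, j : H → F⟩`. -/
def JLang : FirstOrder.Language := ⟨JFun, JRel⟩

/-- A two-sorted structure in the language of the `j`-function: a set `H` with maps
indexed by `G`, a field `F`, and a function `j : H → F`. -/
structure JPreModel : Type 1 where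
  H : Type
  F : Type
  [fieldF : Field F]
  act : GQ → H → H
  j : H → F

attribute [instance] JPreModel.fieldF

/-- The underlying single-sorted carrier `H ⊔ F` of a two-sorted structure. -/
def JPreModel.carrier (M : JPreModel) : Type := M.H ⊕ M.F

instance (M : JPreModel) : JLang.Structure M.carrier where
  funMap {n} f x :=
    match f with
    | .act g => Sum.elim (fun h => (Sum.inl (M.act g h) : M.carrier)) (fun a => Sum.inr a) (x 0)
    | .jmap => Sum.elim (fun h => (Sum.inr (M.j h) : M.carrier)) (fun a => Sum.inr a) (x 0)
    | .add =>
      match x 0, x 1 with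
      | Sum.inr a, Sum.inr b => Sum.inr (a + b)
      | u, _ => u
    | .mul =>
      match x 0, x 1 with
      | Sum.inr a, Sum.inr b => Sum.inr (a * b)
      | u, _ => u
    | .zero => Sum.inr (0 : M.F)
    | .one => Sum.inr (1 : M.F)
  RelMap {n} r x :=
    match r with
    | .isH => (x 0).isLeft

/-- The standard model `ℂ_j = ⟨⟨ℍ; G⟩, ⟨ℂ,+,·,0,1⟩, j : ℍ → ℂ⟩`. -/
def stdModel : JPreModel where
  H := ℍ
  F := ℂ
  act := gqSmul
  j := jFunction

/-- `Th(j)`: the complete first-order theory of the standard model `ℂ_j`. -/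
def ThJ : JLang.Theory := JLang.completeTheory stdModel.carrier

/-- `M` is a model of the complete first-order theory of the standard model. -/
def ModelsThJ (M : JPreModel) : Prop := M.carrier ⊨ ThJ

/-- The `L_{ω₁,ω}` axiom `StandardFibres`: any two points of `H` with the same image
under `j` are related by an element of `SL₂(ℤ)`. -/
def StandardFibres (M : JPreModel) : Prop :=
  ∀ x y : M.H, M.j x = M.j y →
    ∃ γ : Matrix.SpecialLinearGroup (Fin 2) ℤ, M.act (sl2ZtoGQ γ) y = x

/-- The field sort has infinite transcendence degree (over the prime field). -/
def InfiniteTrdeg (M : JPreModel) : Prop :=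
  ∃ v : ℕ → M.F, AlgebraicIndependent ℤ v

/-- A point of the `H`-sort of an abstract model is special if it is fixed by a
nontrivial element of `G`. -/
def JPreModel.IsSpecialPt (M : JPreModel) (τ : M.H) : Prop :=
  ∃ g : GQ, g ≠ 1 ∧ M.act g τ = τ

/-- `ℵ₀`-saturation: every finitely realisable type over finitely many parameters is
realised. -/
def IsOmegaSaturated (M : JPreModel) : Prop :=
  ∀ (n : ℕ) (params : Fin n → M.carrier) (p : Set (JLang.Formula (Fin n ⊕ Unit))),
    (∀ s : Finset (JLang.Formula (Fin n ⊕ Unit)), ↑s ⊆ p →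
      ∃ x : M.carrier, ∀ φ ∈ s, φ.Realize (Sum.elim params (fun _ => x))) →
    ∃ x : M.carrier, ∀ φ ∈ p, φ.Realize (Sum.elim params (fun _ => x))


/-- Inclusion of the `H`-sort into the carrier. -/
def JPreModel.inH (M : JPreModel) (h : M.H) : M.carrier := Sum.inl h

/-- Inclusion of the field sort into the carrier. -/
def JPreModel.inF (M : JPreModel) (f : M.F) : M.carrier := Sum.inr f


/-- A tuple in the `H`-sort of a model is `G`-independent if each entry is non-special
and no two distinct entries lie in the same `G`-orbit. -/
def JPreModel.GIndependent (M : JPreModel) {r : ℕ} (τ : Fin r → M.H) : Prop :=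
  (∀ i, ¬ M.IsSpecialPt (τ i)) ∧
  ∀ i k : Fin r, i ≠ k → ¬ ∃ g : GQ, M.act g (τ i) = τ k

/-- The set of complete types (over `∅`) of tuples `τ̄'`, realisable in models of
`Th(j) + StandardFibres`, whose `j`-images have the same complete (field-sort) type as
the given tuple of complex numbers `z̄`; this is the formal counterpart of counting the
types of tuples `τ̄'` with `j'(τ̄') = j(τ̄)`. -/
def typesAboveFibre {n : ℕ} (z : Fin n → ℂ) :
    Set (Set (FirstOrder.Language.Formula JLang (Fin n))) :=
  {p | ∃ M : JPreModel, ModelsThJ M ∧ StandardFibres M ∧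
    ∃ τ' : Fin n → M.H,
      (∀ φ : FirstOrder.Language.Formula JLang (Fin n),
        φ.Realize (fun i => M.inF (M.j (τ' i))) ↔
          φ.Realize (fun i => stdModel.inF (z i))) ∧
      p = {φ : FirstOrder.Language.Formula JLang (Fin n) |
            φ.Realize (fun i => M.inH (τ' i))}}


end JPaper

/-!
Let `τ` be a free tuple. For `γ ∈ SL₂(ℤ)ⁿ`, the twist of `j` by `γ` is `j` precomposed with the
`G`-equivariant map sending `τ i` to `γ i • τ i`. Since `j (g • γ • x)`, for fixed `g`, depends only
on a coset of `γ` modulo a subgroup of finite index, the twists converge pointwise along every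
ultrafilter on `SL₂(ℤ)ⁿ`. A limit has standard fibres, because each of its fibres is decided by
twists, and it is elementarily equivalent to `j`: all values of `j` on finitely many translates of a
point are attained infinitely often, which is enough for a back-and-forth argument. In the limit
structures, `τ` therefore realizes all the limits, in the Cantor space of sets of formulas, of the
types `P γ` of the tuples `γ • τ` in the standard model, and all of these are types above the
fibre. Conversely, standard fibres of `j` and a finite conjunction of formulas show that every type
above the fibre is such a limit.

So the types above the fibre form the closure of the range of `P`. Each coordinate of `P` is
constant on the left cosets of a subgroup of finite index, and left translation by `δ` amounts to a
substitution in formulas. Hence either `P` is constant on the left cosets of a single subgroup of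
finite index and has finite range, or no `P γ` is isolated and the closure is a perfect set.
-/

namespace JPaper

/-! ### The action of `G` on the upper half plane -/

lemma toGLPosR_apply (a : GL2QPos) (i k : Fin 2) :
    (toGLPosR a : GL (Fin 2) ℝ) i k = (((a : GL (Fin 2) ℚ) i k : ℚ) : ℝ) := rfl

lemma coe_toGLPosR_smul (a : GL2QPos) (z : ℍ) :
    ((toGLPosR a • z : ℍ) : ℂ) =
      (((a : GL (Fin 2) ℚ) 0 0 : ℚ) * (z : ℂ) + ((a : GL (Fin 2) ℚ) 0 1 : ℚ)) /
        (((a : GL (Fin 2) ℚ) 1 0 : ℚ) * (z : ℂ) + ((a : GL (Fin 2) ℚ) 1 1 : ℚ)) := by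
  have h := UpperHalfPlane.coe_smul_of_det_pos (g := (toGLPosR a : GL (Fin 2) ℝ))
    ((Matrix.mem_glpos _).1 (toGLPosR a).2) z
  refine h.trans ?_
  simp [num, denom, toGLPosR_apply]

lemma denom_toGLPosR_ne_zero (a : GL2QPos) (z : ℍ) :
    (((a : GL (Fin 2) ℚ) 1 0 : ℚ) * (z : ℂ) + ((a : GL (Fin 2) ℚ) 1 1 : ℚ)) ≠ 0 := by
  have := denom_ne_zero (toGLPosR a : GL (Fin 2) ℝ) z
  simpa [denom, toGLPosR_apply] using this

lemma toGLPosR_smul_eq_iff {a : GL2QPos} {z : ℍ} :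
    toGLPosR a • z = z ↔
      (((a : GL (Fin 2) ℚ) 0 0 : ℚ) * (z : ℂ) + ((a : GL (Fin 2) ℚ) 0 1 : ℚ)) =
        z * (((a : GL (Fin 2) ℚ) 1 0 : ℚ) * (z : ℂ) + ((a : GL (Fin 2) ℚ) 1 1 : ℚ)) := by
  rw [← div_eq_iff (denom_toGLPosR_ne_zero a z), ← coe_toGLPosR_smul, coe_inj]

lemma commute_sl2ZtoGLQ_iff {a : GL2QPos} (γ : SL(2, ℤ)) :
    Commute (sl2ZtoGLQ γ) a ↔ ∀ i k : Fin 2,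
      (γ i 0 : ℚ) * (a : GL (Fin 2) ℚ) 0 k + (γ i 1 : ℚ) * (a : GL (Fin 2) ℚ) 1 k =
        (a : GL (Fin 2) ℚ) i 0 * (γ 0 k : ℚ) + (a : GL (Fin 2) ℚ) i 1 * (γ 1 k : ℚ) := by
  rw [commute_iff_eq, Subtype.ext_iff, Units.ext_iff, ← Matrix.ext_iff]
  simp only [Subgroup.coe_mul, Units.val_mul, Matrix.mul_apply, Fin.sum_univ_two]
  rfl

lemma mem_center_GL2QPos {a : GL2QPos} :
    a ∈ Subgroup.center GL2QPos ↔ (a : GL (Fin 2) ℚ) 0 1 = 0 ∧ (a : GL (Fin 2) ℚ) 1 0 = 0 ∧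
      (a : GL (Fin 2) ℚ) 0 0 = (a : GL (Fin 2) ℚ) 1 1 := by
  rw [Subgroup.mem_center_iff]
  constructor
  · intro h
    have hT := (commute_sl2ZtoGLQ_iff ModularGroup.T).1 (h _)
    have hS := (commute_sl2ZtoGLQ_iff ModularGroup.S).1 (h _)
    have h₁₀ : (a : GL (Fin 2) ℚ) 1 0 = 0 := by simpa [ModularGroup.T] using hT 0 0
    have h₀₁ : -(a : GL (Fin 2) ℚ) 1 0 = (a : GL (Fin 2) ℚ) 0 1 := by
      simpa [ModularGroup.S] using hS 0 0
    have hdiag : (a : GL (Fin 2) ℚ) 0 1 + (a : GL (Fin 2) ℚ) 1 1 =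
        (a : GL (Fin 2) ℚ) 0 0 + (a : GL (Fin 2) ℚ) 0 1 := by
      simpa [ModularGroup.T] using hT 0 1
    exact ⟨by linarith, h₁₀, by linarith⟩
  · rintro ⟨h₀₁, h₁₀, hdiag⟩ b
    apply Subtype.ext
    apply Units.ext
    ext i k
    fin_cases i <;> fin_cases k <;>
      simp [Matrix.mul_apply, Fin.sum_univ_two, h₀₁, h₁₀, hdiag] <;> ring

lemma toGLPosR_smul_of_mem_center {a : GL2QPos} (ha : a ∈ Subgroup.center GL2QPos) (z : ℍ) :
    toGLPosR a • z = z := by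
  obtain ⟨h₀₁, h₁₀, hdiag⟩ := mem_center_GL2QPos.1 ha
  rw [toGLPosR_smul_eq_iff, h₀₁, h₁₀, hdiag]
  ring

lemma gqSmul_mk (a : GL2QPos) (z : ℍ) : gqSmul (QuotientGroup.mk a) z = toGLPosR a • z := by
  obtain ⟨c, hc⟩ := QuotientGroup.mk_out_eq_mul (Subgroup.center GL2QPos) a
  rw [gqSmul, hc, map_mul, mul_smul, toGLPosR_smul_of_mem_center c.2]

instance gqMulAction : MulAction GQ ℍ where
  smul := gqSmul
  one_smul z := by
    change gqSmul (QuotientGroup.mk 1) z = z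
    rw [gqSmul_mk, map_one, one_smul]
  mul_smul g h z := by
    induction g using QuotientGroup.induction_on with | H a =>
    induction h using QuotientGroup.induction_on with | H b =>
    change gqSmul (QuotientGroup.mk (a * b)) z = gqSmul _ (gqSmul _ z)
    rw [gqSmul_mk, gqSmul_mk, gqSmul_mk, map_mul, mul_smul]

lemma gq_mk_smul (a : GL2QPos) (z : ℍ) : (QuotientGroup.mk a : GQ) • z = toGLPosR a • z :=
  gqSmul_mk a z

/-- A fixed point of `z ↦ (az + b) / (cz + d)` is a root of `cz² + (d - a)z - b`. Two distinct roots
in `ℍ` would have sum `(a - d) / c`, which is real. -/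
lemma mem_center_of_fixed {a : GL2QPos} {x y : ℍ} (hxy : x ≠ y)
    (hx : toGLPosR a • x = x) (hy : toGLPosR a • y = y) : a ∈ Subgroup.center GL2QPos := by
  rw [toGLPosR_smul_eq_iff] at hx hy
  rw [mem_center_GL2QPos]
  set A := (a : GL (Fin 2) ℚ) 0 0
  set B := (a : GL (Fin 2) ℚ) 0 1
  set C := (a : GL (Fin 2) ℚ) 1 0
  set D := (a : GL (Fin 2) ℚ) 1 1
  have hsub : (x : ℂ) - y ≠ 0 := sub_ne_zero.2 fun h => hxy (UpperHalfPlane.ext h)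
  have hsum : (C : ℂ) * ((x : ℂ) + y) + (D - A) = 0 := by
    apply mul_left_cancel₀ hsub
    linear_combination hy - hx
  have hC : C = 0 := by
    have him : (C : ℝ) * (x.im + y.im) = 0 := by simpa using congrArg Complex.im hsum
    have hpos : x.im + y.im ≠ 0 := (add_pos x.im_pos y.im_pos).ne'
    exact_mod_cast (mul_eq_zero.1 him).resolve_right hpos
  simp only [hC, Rat.cast_zero, zero_mul, zero_add] at hsum hx
  have hAD : A = D := by exact_mod_cast (sub_eq_zero.1 hsum).symm
  rw [hAD] at hx
  have hB : (B : ℂ) = 0 := by linear_combination hx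
  exact ⟨by exact_mod_cast hB, hC, hAD⟩

lemma subsingleton_fixedBy {g : GQ} (hg : g ≠ 1) : (MulAction.fixedBy ℍ g).Subsingleton := by
  induction g using QuotientGroup.induction_on with | H a =>
  intro x hx y hy
  rw [MulAction.mem_fixedBy, gq_mk_smul] at hx hy
  by_contra hxy
  exact hg ((QuotientGroup.eq_one_iff a).2 (mem_center_of_fixed hxy hx hy))

lemma sl2ZtoGLQ_mul (γ δ : SL(2, ℤ)) : sl2ZtoGLQ (γ * δ) = sl2ZtoGLQ γ * sl2ZtoGLQ δ := by
  apply Subtype.ext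
  simp [sl2ZtoGLQ]

/-- The canonical homomorphism `SL₂(ℤ) → G`. -/
def sl2ZHom : SL(2, ℤ) →* GQ :=
  MonoidHom.mk' sl2ZtoGQ fun γ δ => by
    rw [sl2ZtoGQ, sl2ZtoGLQ_mul, QuotientGroup.mk_mul, sl2ZtoGQ, sl2ZtoGQ]

lemma sl2ZHom_smul (γ : SL(2, ℤ)) (z : ℍ) : sl2ZHom γ • z = γ • z := by
  change (QuotientGroup.mk (sl2ZtoGLQ γ) : GQ) • z = _
  rw [gq_mk_smul]
  apply UpperHalfPlane.ext
  rw [coe_toGLPosR_smul, coe_specialLinearGroup_apply]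
  simp [sl2ZtoGLQ]

lemma exists_Gamma_conj (g : GQ) :
    ∃ N : ℕ, N ≠ 0 ∧ ∀ γ ∈ CongruenceSubgroup.Gamma N, ∃ δ : SL(2, ℤ),
      g * sl2ZHom γ = sl2ZHom δ * g := by
  induction g using QuotientGroup.induction_on with | H a =>
  obtain ⟨N, hN, h⟩ := CongruenceSubgroup.exists_Gamma_le_conj (a : GL (Fin 2) ℚ) 1
  refine ⟨N, hN, fun γ hγ => ?_⟩
  obtain ⟨δ, -, hδ⟩ := h γ hγ
  refine ⟨δ, ?_⟩
  change (QuotientGroup.mk (a * sl2ZtoGLQ γ) : GQ) = QuotientGroup.mk (sl2ZtoGLQ δ * a)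
  congr 1
  apply Subtype.ext
  change (a : GL (Fin 2) ℚ) * Matrix.SpecialLinearGroup.mapGL ℚ γ =
    Matrix.SpecialLinearGroup.mapGL ℚ δ * a
  rw [hδ]
  group

/-! ### The `j`-function in terms of Eisenstein series -/

/-- The lattice sum `∑ (mτ + n)⁻ᵏ` over the pairs `(m, n) ≠ (0, 0)`. For `k ≠ 0` the pair `(0, 0)`
need not be excluded, as `0⁻¹ = 0`. -/
def latticeSum (k : ℕ) (τ : ℍ) : ℂ :=
  ∑' p : ℤ × ℤ, (((p.1 : ℂ) * (τ : ℂ) + (p.2 : ℂ)) ^ k)⁻¹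

lemma latticeSum_eq_E {k : ℕ} (hk : 3 ≤ k) (τ : ℍ) :
    latticeSum k τ = 2 * riemannZeta k * ModularForm.E hk τ := by
  have hsum : latticeSum k τ = ∑' v : Fin 2 → ℤ, EisensteinSeries.eisSummand k v τ := by
    rw [latticeSum, ← (finTwoArrowEquiv ℤ).tsum_eq]
    exact tsum_congr fun v => by simp [EisensteinSeries.eisSummand]
  have hE : ModularForm.E hk τ = (1 / 2 : ℂ) * eisensteinSeries (N := 1) 0 k τ := rfl
  rw [hsum, tsum_eisSummand_eq_riemannZeta_mul_eisensteinSeries hk τ, hE]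
  ring

lemma riemannZeta_six : riemannZeta 6 = (Real.pi : ℂ) ^ 6 / 945 := by
  have h := riemannZeta_two_mul_nat (k := 3) (by norm_num)
  have hb : bernoulli 6 = 1 / 42 := by
    rw [bernoulli_eq_bernoulli'_of_ne_one (by norm_num), bernoulli'_def]
    have h5 : bernoulli' 5 = 0 := bernoulli'_eq_zero_of_odd (by decide) (by norm_num)
    norm_num [Finset.sum_range_succ, h5, Nat.choose]
  norm_num [hb, Nat.factorial] at h
  rw [h]
  ring

lemma jFunction_eq_latticeSum (τ : ℍ) :
    jFunction τ = 1728 * (60 * latticeSum 4 τ) ^ 3 /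
      ((60 * latticeSum 4 τ) ^ 3 - 27 * (140 * latticeSum 6 τ) ^ 2) := by
  have h (k : ℕ) (hk : k ≠ 0) : (∑' p : ℤ × ℤ,
      if p = 0 then 0 else (((p.1 : ℂ) * (τ : ℂ) + (p.2 : ℂ)) ^ k)⁻¹) = latticeSum k τ := by
    refine tsum_congr fun p => ?_
    split_ifs with hp
    · simp [hp, hk]
    · rfl
  rw [jFunction, h 4 (by norm_num), h 6 (by norm_num)]

lemma latticeSum_four (τ : ℍ) : latticeSum 4 τ = (Real.pi : ℂ) ^ 4 / 45 * ModularForm.E₄ τ := by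
  have := riemannZeta_four
  rw [latticeSum_eq_E (by norm_num)]
  push_cast
  rw [this]
  ring

lemma latticeSum_six (τ : ℍ) :
    latticeSum 6 τ = 2 * (Real.pi : ℂ) ^ 6 / 945 * ModularForm.E₆ τ := by
  rw [latticeSum_eq_E (by norm_num)]
  push_cast
  rw [riemannZeta_six]
  ring

lemma latticeSum_discriminant (τ : ℍ) :
    (60 * latticeSum 4 τ) ^ 3 - 27 * (140 * latticeSum 6 τ) ^ 2 =
      4096 * (Real.pi : ℂ) ^ 12 * ModularForm.discriminant τ := by
  rw [ModularForm.discriminant_eq_E₄_cube_sub_E₆_sq, latticeSum_four, latticeSum_six]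
  ring

lemma latticeSum_discriminant_ne_zero (τ : ℍ) :
    (60 * latticeSum 4 τ) ^ 3 - 27 * (140 * latticeSum 6 τ) ^ 2 ≠ 0 := by
  rw [latticeSum_discriminant]
  have hpi : (Real.pi : ℂ) ≠ 0 := by exact_mod_cast Real.pi_ne_zero
  exact mul_ne_zero (mul_ne_zero (by norm_num) (pow_ne_zero _ hpi))
    (ModularForm.discriminant_ne_zero τ)

lemma latticeSum_smul {k : ℕ} (hk : 3 ≤ k) (γ : SL(2, ℤ)) (τ : ℍ) :
    latticeSum k (γ • τ) = denom γ τ ^ k * latticeSum k τ := by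
  have hE : ModularForm.E hk (γ • τ) = denom γ τ ^ k * ModularForm.E hk τ := by
    rw [← zpow_natCast]
    exact SlashInvariantForm.slash_action_eqn'' (Γ := 𝒮ℒ) (ModularForm.E hk)
      (γ := Matrix.SpecialLinearGroup.mapGL ℝ γ) ⟨γ, rfl⟩ τ
  rw [latticeSum_eq_E hk, latticeSum_eq_E hk, hE]
  ring

lemma jFunction_smul (γ : SL(2, ℤ)) (τ : ℍ) : jFunction (γ • τ) = jFunction τ := by
  have hd : denom γ τ ≠ 0 := denom_ne_zero γ τ
  rw [jFunction_eq_latticeSum, jFunction_eq_latticeSum, latticeSum_smul (by norm_num),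
    latticeSum_smul (by norm_num)]
  refine Eq.trans ?_ (mul_div_mul_left _ _ (pow_ne_zero 12 hd))
  congr 1 <;> ring

/-! ### The invariants `g₂, g₃` determine the lattice -/

section Lattice

open Filter Topology PeriodPair

/-- Comparing leading coefficients in `z * D' = h * D` shows that the order of vanishing of `D` at
the origin is `h 0`, unless it is infinite. -/
lemma eventually_eq_zero_of_mul_deriv_eq {𝕜 : Type*} [NontriviallyNormedField 𝕜] [CompleteSpace 𝕜]
    {D h : 𝕜 → 𝕜} (hD : AnalyticAt 𝕜 D 0) (hh : ContinuousAt h 0) (h0 : ∀ m : ℕ, h 0 ≠ m)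
    (hode : ∀ᶠ z in 𝓝[≠] 0, z * deriv D z = h z * D z) : ∀ᶠ z in 𝓝 0, D z = 0 := by
  by_contra hD0
  obtain ⟨m, u, hu, hu0, hDu⟩ := hD.exists_eventuallyEq_pow_smul_nonzero_iff.2 hD0
  simp only [sub_zero, smul_eq_mul] at hDu
  have hderiv : ∀ᶠ z in 𝓝 0, z * deriv D z = z ^ m * (m * u z + z * deriv u z) := by
    filter_upwards [hDu.eventually_nhds, hu.eventually_analyticAt] with z hz huz
    rw [EventuallyEq.deriv_eq hz, deriv_fun_mul (differentiableAt_pow m) huz.differentiableAt,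
      deriv_pow_field]
    rcases m with _ | m
    · simp
    · rw [Nat.add_sub_cancel]
      ring
  have hlead : ∀ᶠ z in 𝓝[≠] 0, m * u z + z * deriv u z = h z * u z := by
    filter_upwards [hode, hDu.filter_mono nhdsWithin_le_nhds,
      hderiv.filter_mono nhdsWithin_le_nhds, self_mem_nhdsWithin] with z hz hDz hdz hz0
    apply mul_left_cancel₀ (pow_ne_zero m hz0)
    rw [← hdz, hz, hDz]
    ring
  have huc := hu.continuousAt
  have hu'c := hu.deriv.continuousAt
  have hlc : ContinuousAt (fun z => m * u z + z * deriv u z) 0 := by fun_prop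
  have hlim := tendsto_nhds_unique_of_eventuallyEq (hlc.tendsto.mono_left nhdsWithin_le_nhds)
    ((hh.mul huc).tendsto.mono_left nhdsWithin_le_nhds) hlead
  simp only [zero_mul, add_zero, Pi.mul_apply] at hlim
  exact h0 m (mul_right_cancel₀ hu0 hlim.symm)

/-- With `P = z²p + 1`, `P₁ = z³p' - 2` and likewise `Q`, `Q₁`, the difference of the two equations
factors as `(P₁ - Q₁)(P₁ + Q₁) = (P - Q)(4(P² + PQ + Q²) - az⁴)`, and `P₁ - Q₁ = z³(p - q)'`,
`P - Q = z²(p - q)`. -/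
lemma eventuallyEq_of_weierstrass_equation {p q : ℂ → ℂ} {a b : ℂ}
    (hp : AnalyticAt ℂ p 0) (hq : AnalyticAt ℂ q 0)
    (hp' : ∀ᶠ z in 𝓝[≠] (0 : ℂ), (z ^ 3 * deriv p z - 2) ^ 2 =
      4 * (z ^ 2 * p z + 1) ^ 3 - a * z ^ 4 * (z ^ 2 * p z + 1) - b * z ^ 6)
    (hq' : ∀ᶠ z in 𝓝[≠] (0 : ℂ), (z ^ 3 * deriv q z - 2) ^ 2 =
      4 * (z ^ 2 * q z + 1) ^ 3 - a * z ^ 4 * (z ^ 2 * q z + 1) - b * z ^ 6) :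
    p =ᶠ[𝓝 0] q := by
  set T : ℂ → ℂ := fun z => z ^ 3 * (deriv p z + deriv q z) - 4 with hT
  set S : ℂ → ℂ := fun z => 4 * ((z ^ 2 * p z + 1) ^ 2 +
    (z ^ 2 * p z + 1) * (z ^ 2 * q z + 1) + (z ^ 2 * q z + 1) ^ 2) - a * z ^ 4 with hS
  have hpc := hp.continuousAt
  have hqc := hq.continuousAt
  have hp'c := hp.deriv.continuousAt
  have hq'c := hq.deriv.continuousAt
  have hTc : ContinuousAt T 0 := by fun_prop
  have hSc : ContinuousAt S 0 := by fun_prop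
  have hT0 : T 0 = -4 := by simp [hT]
  have hS0 : S 0 = 12 := by norm_num [hS]
  have hTne : T 0 ≠ 0 := by rw [hT0]; norm_num
  have hode : ∀ᶠ z in 𝓝[≠] (0 : ℂ),
      z * deriv (fun z => p z - q z) z = S z / T z * (p z - q z) := by
    filter_upwards [hp', hq', hp.eventually_analyticAt.filter_mono nhdsWithin_le_nhds,
      hq.eventually_analyticAt.filter_mono nhdsWithin_le_nhds,
      (hTc.eventually_ne hTne).filter_mono nhdsWithin_le_nhds, self_mem_nhdsWithin]
      with z hpz hqz hpa hqa hTz hz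
    rw [deriv_fun_sub hpa.differentiableAt hqa.differentiableAt, div_mul_eq_mul_div, eq_div_iff hTz]
    apply mul_left_cancel₀ (pow_ne_zero 2 hz)
    simp only [hT, hS]
    linear_combination hpz - hqz
  have hST : ∀ m : ℕ, S 0 / T 0 ≠ m := fun m h => by
    rw [hS0, hT0, div_eq_iff (by norm_num)] at h
    have : ((12 + m * 4 : ℕ) : ℂ) = 0 := by push_cast; linear_combination h
    exact absurd (Nat.cast_eq_zero.1 this) (by omega)
  exact (eventually_eq_zero_of_mul_deriv_eq (hp.sub hq) (hSc.div hTc hTne) hST hode).mono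
    fun z hz => sub_eq_zero.1 hz

lemma weierstrassPExcept_equation (L : PeriodPair) :
    ∀ᶠ z in 𝓝[≠] (0 : ℂ), (z ^ 3 * deriv (L.weierstrassPExcept 0) z - 2) ^ 2 =
      4 * (z ^ 2 * L.weierstrassPExcept 0 z + 1) ^ 3 -
        L.g₂ * z ^ 4 * (z ^ 2 * L.weierstrassPExcept 0 z + 1) - L.g₃ * z ^ 6 := by
  filter_upwards [mem_nhdsWithin_of_mem_nhds (L.compl_lattice_sdiff_singleton_mem_nhds 0),
    self_mem_nhdsWithin] with z hz (hz0 : z ≠ 0)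
  have hzL : z ∉ L.lattice := fun h => hz ⟨h, hz0⟩
  have hdef := L.weierstrassPExcept_def 0 z
  have hdef' := L.derivWeierstrassPExcept_def 0 z
  simp only [ZeroMemClass.coe_zero, sub_zero] at hdef hdef'
  norm_num at hdef
  have hP : z ^ 2 * L.weierstrassPExcept 0 z + 1 = z ^ 2 * L.weierstrassP z := by
    rw [hdef]; field_simp; ring
  have hP' : z ^ 3 * L.derivWeierstrassPExcept 0 z - 2 = z ^ 3 * L.derivWeierstrassP z := by
    rw [hdef']; field_simp; ring
  rw [L.eqOn_deriv_weierstrassPExcept_derivWeierstrassPExcept 0 hz, hP, hP']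
  linear_combination z ^ 6 * L.derivWeierstrassP_sq z hzL

lemma countable_lattice (L : PeriodPair) : (L.lattice : Set ℂ).Countable :=
  Set.countable_coe_iff.1 L.latticeEquivProd.toEquiv.injective.countable

lemma lattice_compl_mem_nhdsNE (L : PeriodPair) (x : ℂ) : (L.lattice : Set ℂ)ᶜ ∈ 𝓝[≠] x := by
  filter_upwards [mem_nhdsWithin_of_mem_nhds (L.compl_lattice_sdiff_singleton_mem_nhds x),
    self_mem_nhdsWithin] with z hz hz0 h
  exact hz ⟨h, hz0⟩

/-- The two functions agree near the origin and the complement of a countable set is connected. -/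
lemma weierstrassP_eqOn {L M : PeriodPair} (h₂ : L.g₂ = M.g₂) (h₃ : L.g₃ = M.g₃) :
    Set.EqOn L.weierstrassP M.weierstrassP ((L.lattice : Set ℂ) ∪ M.lattice)ᶜ := by
  have hloc : L.weierstrassPExcept 0 =ᶠ[𝓝 0] M.weierstrassPExcept 0 :=
    eventuallyEq_of_weierstrass_equation (L.analyticAt_weierstrassPExcept 0)
      (M.analyticAt_weierstrassPExcept 0) (weierstrassPExcept_equation L)
      (by rw [h₂, h₃]; exact weierstrassPExcept_equation M)
  have hnear : ∀ᶠ z in 𝓝[≠] (0 : ℂ), L.weierstrassP =ᶠ[𝓝 z] M.weierstrassP ∧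
      z ∈ ((L.lattice : Set ℂ) ∪ M.lattice)ᶜ := by
    filter_upwards [hloc.eventually_nhds.filter_mono nhdsWithin_le_nhds,
      lattice_compl_mem_nhdsNE L 0, lattice_compl_mem_nhdsNE M 0] with z hz hL hM
    refine ⟨hz.mono fun w hw => ?_, by simpa using ⟨hL, hM⟩⟩
    have hLw := L.weierstrassPExcept_def 0 w
    have hMw := M.weierstrassPExcept_def 0 w
    simp only [ZeroMemClass.coe_zero] at hLw hMw
    linear_combination hw - hLw + hMw
  obtain ⟨z, hz, hzU⟩ := hnear.exists
  have hconn : IsPreconnected ((L.lattice : Set ℂ) ∪ M.lattice)ᶜ :=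
    (((countable_lattice L).union (countable_lattice M)).isPathConnected_compl_of_one_lt_rank
      (by rw [Complex.rank_real_complex]; norm_num)).isConnected.isPreconnected
  exact (L.analyticOnNhd_weierstrassP.mono (by simp)).eqOn_of_preconnected_of_eventuallyEq
    (M.analyticOnNhd_weierstrassP.mono (by simp)) hconn hzU hz

/-- `℘_L` has a pole at every point of `L`, whereas `℘_M` is analytic off `M`. -/
lemma lattice_le_of_invariants {L M : PeriodPair} (h₂ : L.g₂ = M.g₂) (h₃ : L.g₃ = M.g₃) :
    L.lattice ≤ M.lattice := by
  intro l hl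
  by_contra hlM
  have heq : L.weierstrassP =ᶠ[𝓝[≠] l] M.weierstrassP := by
    filter_upwards [lattice_compl_mem_nhdsNE L l, lattice_compl_mem_nhdsNE M l] with z hL hM
    exact weierstrassP_eqOn h₂ h₃ (by simpa using ⟨hL, hM⟩)
  have horder := (M.analyticOnNhd_weierstrassP l hlM).meromorphicOrderAt_nonneg
  rw [← meromorphicOrderAt_congr heq, L.order_weierstrassP l hl] at horder
  exact absurd horder (by decide)

lemma lattice_eq_of_invariants {L M : PeriodPair} (h₂ : L.g₂ = M.g₂) (h₃ : L.g₃ = M.g₃) :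
    L.lattice = M.lattice :=
  le_antisymm (lattice_le_of_invariants h₂ h₃) (lattice_le_of_invariants h₂.symm h₃.symm)

end Lattice

/-! ### Fibres of the `j`-function -/

/-- The period pair `(cτ, c)`, a basis of the lattice `c(ℤτ + ℤ)`. -/
def scaledPair (c : ℂ) (hc : c ≠ 0) (τ : ℍ) : PeriodPair where
  ω₁ := c * τ
  ω₂ := c
  indep := by
    rw [LinearIndependent.pair_iff]
    intro s t h
    have hst : (s : ℂ) * τ + t = 0 := by
      apply mul_left_cancel₀ hc
      simp only [Complex.real_smul] at h
      linear_combination h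
    have hs : s = 0 := by simpa [τ.im_ne_zero] using congrArg Complex.im hst
    exact ⟨hs, by simpa [hs] using hst⟩

lemma scaledPair_G (c : ℂ) (hc : c ≠ 0) (τ : ℍ) (k : ℕ) :
    c ^ k * (scaledPair c hc τ).G k = latticeSum k τ := by
  rw [PeriodPair.G, latticeSum,
    ← (scaledPair c hc τ).latticeEquivProd.symm.toEquiv.tsum_eq, ← tsum_mul_left]
  refine tsum_congr fun p => ?_
  change c ^ k * (((scaledPair c hc τ).latticeEquivProd.symm p).1 ^ k)⁻¹ = _
  rw [(scaledPair c hc τ).latticeEquiv_symm_apply p]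
  change c ^ k * ((p.1 * (c * τ) + p.2 * c) ^ k)⁻¹ = _
  rw [show (p.1 * (c * τ) + p.2 * c : ℂ) = c * (p.1 * τ + p.2) by ring, mul_pow, mul_inv,
    mul_inv_cancel_left₀ (pow_ne_zero _ hc)]

lemma exists_eq_mul_of_pow_eq_pow {K : Type*} [Field K] {n : ℕ} (hn : n ≠ 0) {x y : K}
    (h : x ^ n = y ^ n) : ∃ ζ : K, ζ ^ n = 1 ∧ x = ζ * y := by
  rcases eq_or_ne y 0 with rfl | hy
  · refine ⟨1, one_pow n, ?_⟩
    rw [zero_pow hn] at h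
    rw [mul_zero, eq_zero_of_pow_eq_zero h]
  · exact ⟨x / y, by rw [div_pow, h, div_self (pow_ne_zero n hy)], (div_mul_cancel₀ x hy).symm⟩

/-- A twelfth root `c` of the quotient of the discriminants satisfies `a = ζ c⁴ a'` with `ζ³ = 1`
and `b = ± c⁶ b'`; multiplying `c` by `ζ`, or by `ζ i` with `i² = -1`, corrects the root of unity
and the sign. -/
lemma exists_scaling {K : Type*} [Field K] [IsAlgClosed K] [CharZero K] {a b a' b' : K}
    (hD : a ^ 3 - 27 * b ^ 2 ≠ 0) (hD' : a' ^ 3 - 27 * b' ^ 2 ≠ 0)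
    (h : a ^ 3 / (a ^ 3 - 27 * b ^ 2) = a' ^ 3 / (a' ^ 3 - 27 * b' ^ 2)) :
    ∃ c : K, c ≠ 0 ∧ a = c ^ 4 * a' ∧ b = c ^ 6 * b' := by
  obtain ⟨c, hc⟩ := IsAlgClosed.exists_pow_nat_eq
    ((a ^ 3 - 27 * b ^ 2) / (a' ^ 3 - 27 * b' ^ 2)) (n := 12) (by norm_num)
  have hc0 : c ≠ 0 := by
    rintro rfl
    rw [zero_pow (by norm_num)] at hc
    exact div_ne_zero hD hD' hc.symm
  have hdisc : a ^ 3 - 27 * b ^ 2 = c ^ 12 * (a' ^ 3 - 27 * b' ^ 2) := by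
    rw [hc, div_mul_cancel₀ _ hD']
  have ha : a ^ 3 = (c ^ 4 * a') ^ 3 := by
    rw [div_eq_div_iff hD hD', hdisc] at h
    apply mul_right_cancel₀ hD'
    linear_combination h
  have hb : b ^ 2 = (c ^ 6 * b') ^ 2 := by
    apply mul_left_cancel₀ (show (27 : K) ≠ 0 by norm_num)
    linear_combination ha - hdisc
  obtain ⟨ζ, hζ, ha⟩ := exists_eq_mul_of_pow_eq_pow (by norm_num) ha
  have hζ0 : ζ ≠ 0 := by
    rintro rfl
    norm_num at hζ
  rcases sq_eq_sq_iff_eq_or_eq_neg.1 hb with hb | hb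
  · refine ⟨ζ * c, mul_ne_zero hζ0 hc0, ?_, ?_⟩
    · linear_combination ha - ζ * c ^ 4 * a' * hζ
    · linear_combination hb - (ζ ^ 3 + 1) * c ^ 6 * b' * hζ
  · obtain ⟨i, hi⟩ := IsAlgClosed.exists_pow_nat_eq (-1 : K) (n := 2) (by norm_num)
    have hi0 : i ≠ 0 := by
      rintro rfl
      norm_num at hi
    have hi4 : i ^ 4 = 1 := by linear_combination (i ^ 2 - 1) * hi
    have hi6 : i ^ 6 = -1 := by linear_combination (i ^ 4 - i ^ 2 + 1) * hi
    refine ⟨ζ * i * c, mul_ne_zero (mul_ne_zero hζ0 hi0) hc0, ?_, ?_⟩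
    · linear_combination ha - ζ * c ^ 4 * a' * hζ - ζ ^ 4 * c ^ 4 * a' * hi4
    · linear_combination hb + (ζ ^ 3 + 1) * c ^ 6 * b' * hζ - ζ ^ 6 * c ^ 6 * b' * hi6

lemma int_pair_eq (y : ℍ) {m n m' n' : ℤ} (h : (m * y + n : ℂ) = m' * y + n') :
    m = m' ∧ n = n' := by
  have hm : m = m' := by simpa [y.im_ne_zero] using congrArg Complex.im h
  subst hm
  exact ⟨rfl, by exact_mod_cast add_left_cancel h⟩

section ScaledLattice

variable {c : ℂ} {x y : ℍ} {p q r s : ℤ}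

lemma isUnit_det_of_scaled_lattice_eq (hc : c ≠ 0)
    (h : (scaledPair c hc x).lattice = (scaledPair 1 one_ne_zero y).lattice)
    (hω₁ : c * x = p * y + q) (hω₂ : c = r * y + s) : IsUnit (p * s - q * r) := by
  have hmem₁ := (scaledPair 1 one_ne_zero y).ω₁_mem_lattice
  have hmem₂ := (scaledPair 1 one_ne_zero y).ω₂_mem_lattice
  rw [← h, PeriodPair.mem_lattice] at hmem₁ hmem₂
  simp only [scaledPair, one_mul] at hmem₁ hmem₂
  obtain ⟨p', q', h₁⟩ := hmem₁
  obtain ⟨r', s', h₂⟩ := hmem₂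
  obtain ⟨h₁₁, h₁₂⟩ := int_pair_eq y (m := p' * p + q' * r) (n := p' * q + q' * s)
    (m' := 1) (n' := 0) (by push_cast; linear_combination h₁ - p' * hω₁ - q' * hω₂)
  obtain ⟨h₂₁, h₂₂⟩ := int_pair_eq y (m := r' * p + s' * r) (n := r' * q + s' * s)
    (m' := 0) (n' := 1) (by push_cast; linear_combination h₂ - r' * hω₁ - s' * hω₂)
  refine IsUnit.of_mul_eq_one_right (p' * s' - q' * r') ?_
  calc (p' * s' - q' * r') * (p * s - q * r)
      = (p' * p + q' * r) * (r' * q + s' * s) - (p' * q + q' * s) * (r' * p + s' * r) := by ring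
    _ = 1 := by rw [h₁₁, h₁₂, h₂₁, h₂₂]; norm_num

lemma det_pos_of_scaled_eq (hc : c ≠ 0) (hω₁ : c * x = p * y + q) (hω₂ : c = r * y + s) :
    0 < p * s - q * r := by
  have him : x.im * Complex.normSq c = (p * s - q * r : ℤ) * y.im := by
    have hmul : (x : ℂ) * (Complex.normSq c : ℂ) = (p * y + q) * (starRingEnd ℂ) (r * y + s) := by
      rw [← hω₁, ← hω₂, Complex.normSq_eq_conj_mul_self]
      ring
    have him' := congrArg Complex.im hmul
    simp only [Complex.ofReal_re, Complex.ofReal_im, mul_zero, zero_add, coe_im, map_add,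
      map_mul, map_intCast, Complex.mul_im,
      Complex.add_re, Complex.mul_re, Complex.intCast_re, Complex.intCast_im, coe_re, zero_mul,
      sub_zero, Complex.add_im, Complex.conj_re, Complex.conj_im, add_zero] at him'
    push_cast
    linear_combination him'
  have hpos : (0 : ℝ) < (p * s - q * r : ℤ) * y.im :=
    him ▸ mul_pos x.im_pos (Complex.normSq_pos.2 hc)
  exact_mod_cast (pos_iff_pos_of_mul_pos hpos).2 y.im_pos

lemma exists_smul_of_scaled_lattice_eq (hc : c ≠ 0)
    (h : (scaledPair c hc x).lattice = (scaledPair 1 one_ne_zero y).lattice) :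
    ∃ γ : SL(2, ℤ), γ • y = x := by
  have hmem₁ := (scaledPair c hc x).ω₁_mem_lattice
  have hmem₂ := (scaledPair c hc x).ω₂_mem_lattice
  rw [h, PeriodPair.mem_lattice] at hmem₁ hmem₂
  simp only [scaledPair, mul_one, one_mul] at hmem₁ hmem₂
  obtain ⟨p, q, hω₁⟩ := hmem₁
  obtain ⟨r, s, hω₂⟩ := hmem₂
  have hdet : p * s - q * r = 1 :=
    (Int.isUnit_iff.1 (isUnit_det_of_scaled_lattice_eq hc h hω₁.symm hω₂.symm)).resolve_right
      (by linarith [det_pos_of_scaled_eq hc hω₁.symm hω₂.symm])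
  let γ : SL(2, ℤ) := ⟨!![p, q; r, s], by rw [Matrix.det_fin_two_of]; exact hdet⟩
  refine ⟨γ, UpperHalfPlane.ext ?_⟩
  calc ((γ • y : ℍ) : ℂ) = (p * y + q) / (r * y + s) := by
        rw [coe_specialLinearGroup_apply]
        simp [γ]
    _ = x := by rw [hω₁, hω₂]; field_simp

end ScaledLattice

lemma exists_smul_of_jFunction_eq {x y : ℍ} (h : jFunction x = jFunction y) :
    ∃ γ : SL(2, ℤ), γ • y = x := by
  rw [jFunction_eq_latticeSum, jFunction_eq_latticeSum, mul_div_assoc, mul_div_assoc] at h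
  obtain ⟨c, hc, h₄, h₆⟩ := exists_scaling (latticeSum_discriminant_ne_zero x)
    (latticeSum_discriminant_ne_zero y) (mul_left_cancel₀ (by norm_num) h)
  apply exists_smul_of_scaled_lattice_eq hc
  apply lattice_eq_of_invariants
  · rw [PeriodPair.g₂, PeriodPair.g₂]
    apply mul_left_cancel₀ (pow_ne_zero 4 hc)
    linear_combination 60 * scaledPair_G c hc x 4 + h₄ -
      c ^ 4 * 60 * scaledPair_G 1 one_ne_zero y 4
  · rw [PeriodPair.g₃, PeriodPair.g₃]
    apply mul_left_cancel₀ (pow_ne_zero 6 hc)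
    linear_combination 140 * scaledPair_G c hc x 6 + h₆ -
      c ^ 6 * 140 * scaledPair_G 1 one_ne_zero y 6

lemma jFunction_eq_iff {x y : ℍ} :
    jFunction x = jFunction y ↔ ∃ γ : SL(2, ℤ), sl2ZHom γ • y = x := by
  simp only [sl2ZHom_smul]
  refine ⟨exists_smul_of_jFunction_eq, ?_⟩
  rintro ⟨γ, rfl⟩
  exact jFunction_smul γ y

/-! ### Back-and-forth between structures with the same points and the same field -/

open FirstOrder FirstOrder.Language Pointwise

namespace JPreModel

variable (M : JPreModel)

/-- The interpretation of `j` on the carrier; the field sort is mapped identically. -/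
def jval : M.carrier → M.F := Sum.elim M.j id

/-- The extension of a binary operation on the field sort to the carrier, with the first argument as
value if one of the arguments is not in the field sort. -/
def binop (op : M.F → M.F → M.F) (u w : M.carrier) : M.carrier :=
  match u, w with
  | Sum.inr a, Sum.inr b => Sum.inr (op a b)
  | u, _ => u

variable {M}

@[simp] lemma inH_ne_inF (x : M.H) (c : M.F) : M.inH x ≠ M.inF c := Sum.inl_ne_inr

@[simp] lemma inH_inj {x y : M.H} : M.inH x = M.inH y ↔ x = y := Sum.inl.inj_iff

@[simp] lemma inF_inj {c d : M.F} : M.inF c = M.inF d ↔ c = d := Sum.inr.inj_iff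

lemma exists_inH_or_exists_inF (u : M.carrier) : (∃ x, u = M.inH x) ∨ ∃ c, u = M.inF c :=
  match u with
  | Sum.inl x => Or.inl ⟨x, rfl⟩
  | Sum.inr c => Or.inr ⟨c, rfl⟩

lemma binop_eq_left (op : M.F → M.F → M.F) {u w : M.carrier}
    (h : ¬ ((∃ c, u = M.inF c) ∧ ∃ d, w = M.inF d)) : M.binop op u w = u :=
  match u, w with
  | Sum.inl _, _ => rfl
  | Sum.inr _, Sum.inl _ => rfl
  | Sum.inr c, Sum.inr d => absurd ⟨⟨c, rfl⟩, ⟨d, rfl⟩⟩ h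

lemma realize_jmap {ι : Type*} (v : ι → M.carrier) (ts : Fin 1 → JLang.Term ι) :
    (Term.func (L := JLang) JFun.jmap ts).realize v = M.inF (M.jval ((ts 0).realize v)) := by
  change Sum.elim _ _ ((ts 0).realize (M := M.carrier) v) = _
  generalize (ts 0).realize v = u
  rcases u with _ | _ <;> rfl

lemma realize_add {ι : Type*} (v : ι → M.carrier) (ts : Fin 2 → JLang.Term ι) :
    (Term.func (L := JLang) JFun.add ts).realize v =
      M.binop (· + ·) ((ts 0).realize v) ((ts 1).realize v) := rfl

lemma realize_mul {ι : Type*} (v : ι → M.carrier) (ts : Fin 2 → JLang.Term ι) :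
    (Term.func (L := JLang) JFun.mul ts).realize v =
      M.binop (· * ·) ((ts 0).realize v) ((ts 1).realize v) := rfl

lemma relMap_isH {x : Fin 1 → M.carrier} :
    Structure.RelMap (L := JLang) (JRel.isH : JRel 1) x ↔ ¬ ∃ c, x 0 = M.inF c := by
  change (x 0).isLeft ↔ _
  rcases exists_inH_or_exists_inF (x 0) with ⟨y, hy⟩ | ⟨c, hc⟩
  · simp only [hy, inH_ne_inF, exists_false, not_false_eq_true, iff_true]
    rfl
  · simp only [hc, inF_inj, exists_eq', not_true_eq_false, iff_false]
    exact Bool.false_ne_true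

end JPreModel

open JPreModel

lemma exists_symmetric_superset {G : Type*} [Group G] (B : Finset G) :
    ∃ C : Finset G, B ⊆ C ∧ 1 ∈ C ∧ ∀ c ∈ C, c⁻¹ ∈ C := by
  refine ⟨insert 1 (B ∪ B⁻¹), fun b hb => by simp [hb], by simp, fun c hc => ?_⟩
  simp only [Finset.mem_insert, Finset.mem_union, Finset.mem_inv', inv_inv, inv_eq_one] at hc ⊢
  tauto

lemma sumElim_snoc_eq_comp {α X : Type*} {n : ℕ} (w : α → X) (ys : Fin n → X) (u : X) :
    Sum.elim w (Fin.snoc ys u : Fin (n + 1) → X) =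
      (fun o : Option (α ⊕ Fin n) => o.elim u (Sum.elim w ys)) ∘
        Sum.elim (fun a => some (Sum.inl a))
          (Fin.snoc (fun i => some (Sum.inr i)) none : Fin (n + 1) → Option (α ⊕ Fin n)) := by
  ext1 (a | i)
  · rfl
  · refine Fin.lastCases ?_ (fun i => ?_) i <;> simp

section BackAndForth

variable {H F : Type} [MulAction GQ H] {f f' : H → F}

/-- The hypothesis of the back-and-forth argument: two maps agree at the points with nontrivial
stabilizer, and finitely many values of one map on an orbit are attained infinitely often by the
other one. -/
structure LocallyEquivalent (f f' : H → F) : Prop where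
  fixed : ∀ x : H, (∃ g : GQ, g ≠ 1 ∧ g • x = x) → f x = f' x
  forth : ∀ (x : H) (B : Finset GQ), {x' | ∀ b ∈ B, f' (b • x') = f (b • x)}.Infinite
  back : ∀ (x : H) (B : Finset GQ), {x' | ∀ b ∈ B, f (b • x') = f' (b • x)}.Infinite

lemma LocallyEquivalent.symm (h : LocallyEquivalent f f') : LocallyEquivalent f' f :=
  ⟨fun x hx => (h.fixed x hx).symm, h.back, h.forth⟩

lemma LocallyEquivalent.eq_smul (h : LocallyEquivalent f f') {g : GQ} {x : H} (hg : g ≠ 1)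
    (hgx : g • x = x) (k : GQ) : f (k • x) = f' (k • x) :=
  h.fixed _ ⟨k * g * k⁻¹, by simpa only [ne_eq, conj_eq_one_iff], by
    rw [mul_smul, inv_smul_smul, mul_smul, hgx]⟩

variable [Field F]

/-- The two-sorted structure on a `G`-set and a field given by a map between them. -/
abbrev ofMap (f : H → F) : JPreModel where
  H := H
  F := F
  act g x := g • x
  j := f

/-- The action of `G` on both sorts, trivial on the field sort. -/
instance carrierMulAction : MulAction GQ (ofMap f).carrier where
  smul g := Sum.map (g • ·) id
  one_smul u := by
    rcases u with x | c
    · exact congrArg Sum.inl (one_smul GQ x)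
    · rfl
  mul_smul g h u := by
    rcases u with x | c
    · exact congrArg Sum.inl (mul_smul g h x)
    · rfl

@[simp] lemma smul_inH (g : GQ) (x : H) : g • (ofMap f).inH x = (ofMap f).inH (g • x) := rfl

@[simp] lemma smul_inF (g : GQ) (c : F) : g • (ofMap f).inF c = (ofMap f).inF c := rfl

lemma smul_eq_inF_iff {g : GQ} {u : (ofMap f).carrier} {c : F} :
    g • u = (ofMap f).inF c ↔ u = (ofMap f).inF c := by
  rw [smul_eq_iff_eq_inv_smul, smul_inF]

lemma realize_act {ι : Type*} (g : GQ) (v : ι → (ofMap f).carrier) (ts : Fin 1 → JLang.Term ι) :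
    (Term.func (L := JLang) (JFun.act g) ts).realize v = g • (ts 0).realize v := by
  change Sum.elim _ _ ((ts 0).realize (M := (ofMap f).carrier) v) = _
  generalize (ts 0).realize v = u
  rcases u with _ | _ <;> rfl

/-- Two tuples are similar with respect to a set `B` of elements of `G` if they have the same
entries in the field sort and the same `j`-values of `B`-translates, and satisfy the same relations
given by elements of `B`: this is the part of their quantifier-free types visible to `B`. -/
structure Similar {ι : Type*} (B : Finset GQ) (v : ι → (ofMap f).carrier)
    (v' : ι → (ofMap f').carrier) : Prop where
  field : ∀ i c, v i = (ofMap f).inF c ↔ v' i = (ofMap f').inF c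
  val : ∀ i, ∀ b ∈ B, (ofMap f).jval (b • v i) = (ofMap f').jval (b • v' i)
  rel : ∀ i k, ∀ b ∈ B, b • v i = v k ↔ b • v' i = v' k

/-- Two elements correspond with respect to a pair of tuples if they are the same element of the
field sort or are obtained by the same element of `B` from entries with the same index. -/
def Corresponds {ι : Type*} (B : Finset GQ) (v : ι → (ofMap f).carrier)
    (v' : ι → (ofMap f').carrier) (u : (ofMap f).carrier) (u' : (ofMap f').carrier) : Prop :=
  (∃ c : F, u = (ofMap f).inF c ∧ u' = (ofMap f').inF c) ∨
    ∃ i, ∃ g ∈ B, u = g • v i ∧ u' = g • v' i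

variable {ι κ : Type*} {B C : Finset GQ}
  {v : ι → (ofMap f).carrier} {v' : ι → (ofMap f').carrier}
  {u w : (ofMap f).carrier} {u' w' : (ofMap f').carrier}

lemma Similar.mono (h : Similar C v v') (hBC : B ⊆ C) : Similar B v v' :=
  ⟨h.field, fun i g hg => h.val i g (hBC hg), fun i k g hg => h.rel i k g (hBC hg)⟩

lemma Similar.symm (h : Similar B v v') : Similar B v' v :=
  ⟨fun i c => (h.field i c).symm, fun i g hg => (h.val i g hg).symm,
    fun i k g hg => (h.rel i k g hg).symm⟩

lemma Similar.comp (h : Similar B v v') (e : κ → ι) : Similar B (v ∘ e) (v' ∘ e) :=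
  ⟨fun i => h.field (e i), fun i => h.val (e i), fun i k => h.rel (e i) (e k)⟩

namespace Corresponds

lemma mono (h : Corresponds B v v' u u') (hBC : B ⊆ C) : Corresponds C v v' u u' :=
  h.imp_right fun ⟨i, g, hg, hu⟩ => ⟨i, g, hBC hg, hu⟩

lemma eq_inF_iff (hu : Corresponds B v v' u u') (hv : Similar C v v') (c : F) :
    u = (ofMap f).inF c ↔ u' = (ofMap f').inF c := by
  rcases hu with ⟨d, rfl, rfl⟩ | ⟨i, g, -, rfl, rfl⟩
  · rw [inF_inj, inF_inj]
  · rw [smul_eq_inF_iff, smul_eq_inF_iff, hv.field]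

lemma jval_eq (hu : Corresponds B v v' u u') (hv : Similar B v v') :
    (ofMap f).jval u = (ofMap f').jval u' := by
  rcases hu with ⟨d, rfl, rfl⟩ | ⟨i, g, hg, rfl, rfl⟩
  exacts [rfl, hv.val i g hg]

lemma eq_iff (hu : Corresponds B v v' u u') (hw : Corresponds C v v' w w')
    (hv : Similar (C⁻¹ * B) v v') : u = w ↔ u' = w' := by
  rcases hw with ⟨d, rfl, rfl⟩ | ⟨k, c, hc, rfl, rfl⟩
  · exact hu.eq_inF_iff hv d
  rcases hu with ⟨d, rfl, rfl⟩ | ⟨i, b, hb, rfl, rfl⟩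
  · rw [eq_comm, smul_eq_inF_iff, hv.field, eq_comm (a := (ofMap f').inF d), smul_eq_inF_iff]
  · have := hv.rel i k (c⁻¹ * b) (Finset.mul_mem_mul (Finset.inv_mem_inv hc) hb)
    rwa [mul_smul, mul_smul, inv_smul_eq_iff, inv_smul_eq_iff] at this

lemma smul (g : GQ) (hu : Corresponds B v v' u u') :
    Corresponds ({g} * B) v v' (g • u) (g • u') := by
  rcases hu with ⟨d, rfl, rfl⟩ | ⟨i, b, hb, rfl, rfl⟩
  · exact Or.inl ⟨d, smul_inF g d, smul_inF g d⟩
  · exact Or.inr ⟨i, g * b, Finset.mul_mem_mul (Finset.mem_singleton_self g) hb,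
      (mul_smul g b _).symm, (mul_smul g b _).symm⟩

lemma binop (op : F → F → F) (hv : Similar B v v')
    (hu : Corresponds B v v' u u') (hw : Corresponds B v v' w w') :
    Corresponds B v v' ((ofMap f).binop op u w) ((ofMap f').binop op u' w') := by
  by_cases h : (∃ c, u = (ofMap f).inF c) ∧ ∃ d, w = (ofMap f).inF d
  · obtain ⟨⟨c, rfl⟩, d, rfl⟩ := h
    rw [(hu.eq_inF_iff hv c).1 rfl, (hw.eq_inF_iff hv d).1 rfl]
    exact Or.inl ⟨op c d, rfl, rfl⟩
  · have h' : ¬ ((∃ c, u' = (ofMap f').inF c) ∧ ∃ d, w' = (ofMap f').inF d) := by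
      simpa only [hu.eq_inF_iff hv, hw.eq_inF_iff hv] using h
    rwa [binop_eq_left op h, binop_eq_left op h']

end Corresponds

lemma exists_corresponds_realize (t : JLang.Term ι) :
    ∃ B : Finset GQ, ∀ {f f' : H → F} {v : ι → (ofMap f).carrier} {v' : ι → (ofMap f').carrier},
      Similar B v v' → Corresponds B v v' (t.realize v) (t.realize v') := by
  induction t with
  | var i =>
    exact ⟨{1}, fun _ => Or.inr
      ⟨i, 1, Finset.mem_singleton_self 1, (one_smul GQ _).symm, (one_smul GQ _).symm⟩⟩
  | @func l s ts ih =>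
    cases s with
    | act g =>
      obtain ⟨B, hB⟩ := ih 0
      refine ⟨B ∪ {g} * B, fun h => ?_⟩
      rw [realize_act, realize_act]
      exact ((hB (h.mono Finset.subset_union_left)).smul g).mono Finset.subset_union_right
    | jmap =>
      obtain ⟨B, hB⟩ := ih 0
      refine ⟨B, fun h => Or.inl ⟨_, realize_jmap _ _, ?_⟩⟩
      rw [realize_jmap, (hB h).jval_eq h]
    | add =>
      obtain ⟨B, hB⟩ := ih 0
      obtain ⟨C, hC⟩ := ih 1
      refine ⟨B ∪ C, fun h => ?_⟩
      rw [realize_add, realize_add]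
      exact ((hB (h.mono Finset.subset_union_left)).mono Finset.subset_union_left).binop _ h
        ((hC (h.mono Finset.subset_union_right)).mono Finset.subset_union_right)
    | mul =>
      obtain ⟨B, hB⟩ := ih 0
      obtain ⟨C, hC⟩ := ih 1
      refine ⟨B ∪ C, fun h => ?_⟩
      rw [realize_mul, realize_mul]
      exact ((hB (h.mono Finset.subset_union_left)).mono Finset.subset_union_left).binop _ h
        ((hC (h.mono Finset.subset_union_right)).mono Finset.subset_union_right)
    | zero => exact ⟨∅, fun _ => Or.inl ⟨0, rfl, rfl⟩⟩
    | one => exact ⟨∅, fun _ => Or.inl ⟨1, rfl, rfl⟩⟩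

lemma Similar.option_elim (h : Similar B v v') (hinv : ∀ b ∈ B, b⁻¹ ∈ B)
    (hfield : ∀ c, u = (ofMap f).inF c ↔ u' = (ofMap f').inF c)
    (hval : ∀ b ∈ B, (ofMap f).jval (b • u) = (ofMap f').jval (b • u'))
    (hself : ∀ b ∈ B, b • u = u ↔ b • u' = u')
    (hrel : ∀ i, ∀ b ∈ B, b • v i = u ↔ b • v' i = u') :
    Similar B (fun o : Option ι => o.elim u v) (fun o : Option ι => o.elim u' v') where
  field := Option.forall.2 ⟨hfield, h.field⟩
  val := Option.forall.2 ⟨hval, h.val⟩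
  rel := Option.forall.2 ⟨Option.forall.2 ⟨hself, fun k b hb => by
      have := hrel k b⁻¹ (hinv b hb)
      rwa [inv_smul_eq_iff, inv_smul_eq_iff, eq_comm, eq_comm (a := v' k)] at this⟩,
    fun i => Option.forall.2 ⟨hrel i, h.rel i⟩⟩

lemma Corresponds.similar_option_elim (hu : Corresponds B v v' u u') (h1 : 1 ∈ B)
    (hinv : ∀ b ∈ B, b⁻¹ ∈ B) (hv : Similar (B * B * B) v v') :
    Similar B (fun o : Option ι => o.elim u v) (fun o : Option ι => o.elim u' v') := by
  have hinv' : B⁻¹ ⊆ B := fun b hb => inv_inv b ▸ hinv _ (Finset.mem_inv'.1 hb)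
  have hBB : B * B ⊆ B * B * B := Finset.subset_mul_left _ h1
  have hB : B ⊆ B * B * B := (Finset.subset_mul_left _ h1).trans hBB
  refine (hv.mono hB).option_elim hinv (hu.eq_inF_iff hv) (fun b hb => ?_) (fun b hb => ?_)
    fun i b hb => ?_
  · exact (hu.smul b).jval_eq (hv.mono <|
      (Finset.mul_subset_mul_right (Finset.singleton_subset_iff.2 hb)).trans hBB)
  · refine (hu.smul b).eq_iff hu (hv.mono ?_)
    rw [← mul_assoc]
    exact Finset.mul_subset_mul_right
      (Finset.mul_subset_mul hinv' (Finset.singleton_subset_iff.2 hb))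
  · have hi : Corresponds {b} v v' (b • v i) (b • v' i) :=
      Or.inr ⟨i, b, Finset.mem_singleton_self b, rfl, rfl⟩
    exact hi.eq_iff hu (hv.mono <|
      (Finset.mul_subset_mul hinv' (Finset.singleton_subset_iff.2 hb)).trans hBB)

/-- Conjugating `b` by `c` gives a nontrivial element with the fixed point `c⁻¹ • x`, and by
similarity it also fixes `v i`. -/
lemma Similar.smul_eq_inH_of_fixed (hfix : ∀ g : GQ, g ≠ 1 → (MulAction.fixedBy H g).Subsingleton)
    (hv : Similar (B * B * B) v v') (hinv : ∀ b ∈ B, b⁻¹ ∈ B) {b c : GQ} (hb : b ∈ B) (hb1 : b ≠ 1)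
    (hc : c ∈ B) {x : H} (hbx : b • x = x) {i : ι} (hcx : c • v' i = (ofMap f').inH x) :
    c • v i = (ofMap f).inH x := by
  have hv' : v' i = (ofMap f').inH (c⁻¹ • x) := by rw [← smul_inH, eq_inv_smul_iff, hcx]
  have hgx : (c⁻¹ * b * c) • c⁻¹ • x = c⁻¹ • x := by
    rw [mul_smul, mul_smul, smul_inv_smul, hbx]
  have hg1 : c⁻¹ * b * c ≠ 1 := by
    have := (conj_eq_one_iff (a := c⁻¹) (b := b)).not.2 hb1
    rwa [inv_inv] at this
  have hgv : (c⁻¹ * b * c) • v i = v i :=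
    (hv.rel i i _ (Finset.mul_mem_mul (Finset.mul_mem_mul (hinv c hc) hb) hc)).2 (by
      rw [hv', smul_inH, hgx])
  rcases exists_inH_or_exists_inF (v i) with ⟨y, hy⟩ | ⟨d, hd⟩
  · rw [hy, smul_inH, inH_inj] at hgv
    rw [hy, smul_inH, inH_inj, hfix _ hg1 hgv hgx, smul_inv_smul]
  · exact absurd (hv'.symm.trans ((hv.field i d).1 hd)) (inH_ne_inF _ _)

lemma exists_far_companion [Finite ι]
    (hfix : ∀ g : GQ, g ≠ 1 → (MulAction.fixedBy H g).Subsingleton) (hff : LocallyEquivalent f f')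
    (hv : Similar (B * B * B) v v') (hinv : ∀ b ∈ B, b⁻¹ ∈ B) {x : H}
    (hfar : ∀ i, ∀ c ∈ B, c • v i ≠ (ofMap f).inH x) :
    ∃ x' : H, (∀ b ∈ B, f (b • x) = f' (b • x')) ∧ (∀ b ∈ B, b • x = x ↔ b • x' = x') ∧
      ∀ i, ∀ c ∈ B, c • v' i ≠ (ofMap f').inH x' := by
  by_cases hx : ∃ b ∈ B, b ≠ 1 ∧ b • x = x
  · obtain ⟨b, hb, hb1, hbx⟩ := hx
    exact ⟨x, fun c _ => hff.eq_smul hb1 hbx c, fun _ _ => Iff.rfl, fun i c hc hcx =>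
      hfar i c hc (hv.smul_eq_inH_of_fixed hfix hinv hb hb1 hc hbx hcx)⟩
  · push Not at hx
    have hnear : (⋃ i, ⋃ c ∈ B, {x' : H | c • v' i = (ofMap f').inH x'}).Finite :=
      Set.finite_iUnion fun i => B.finite_toSet.biUnion fun c _ =>
        Set.Subsingleton.finite fun _ hy _ hz => inH_inj.1 (hy.symm.trans hz)
    have hfixed : (⋃ b ∈ B, {x' : H | b ≠ 1 ∧ b • x' = x'}).Finite :=
      B.finite_toSet.biUnion fun b _ =>
        Set.Subsingleton.finite fun _ hy _ hz => hfix b hy.1 hy.2 hz.2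
    obtain ⟨x', hx', hnot⟩ := ((hff.forth x B).sdiff (hnear.union hfixed)).nonempty
    simp only [Set.mem_union, Set.mem_iUnion, Set.mem_ofPred_eq, not_or, not_exists,
      not_and] at hnot
    refine ⟨x', fun b hb => (hx' b hb).symm, fun b hb => ?_, hnot.1⟩
    by_cases hb1 : b = 1
    · rw [hb1, one_smul, one_smul, eq_self, eq_self]
    · exact iff_of_false (hx b hb hb1) (hnot.2 b hb hb1)

lemma Similar.exists_extension [Finite ι]
    (hfix : ∀ g : GQ, g ≠ 1 → (MulAction.fixedBy H g).Subsingleton) (hff : LocallyEquivalent f f')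
    (h1 : 1 ∈ B) (hinv : ∀ b ∈ B, b⁻¹ ∈ B) (hv : Similar (B * B * B) v v')
    (u : (ofMap f).carrier) :
    ∃ u' : (ofMap f').carrier,
      Similar B (fun o : Option ι => o.elim u v) (fun o : Option ι => o.elim u' v') := by
  by_cases hu : ∃ u', Corresponds B v v' u u'
  · obtain ⟨u', hu'⟩ := hu
    exact ⟨u', hu'.similar_option_elim h1 hinv hv⟩
  obtain ⟨x, rfl⟩ | ⟨c, rfl⟩ := exists_inH_or_exists_inF u
  · have hfar (i) (c) (hc : c ∈ B) : c • v i ≠ (ofMap f).inH x := fun hcx =>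
      hu ⟨c • v' i, Or.inr ⟨i, c, hc, hcx.symm, rfl⟩⟩
    obtain ⟨x', hval, hself, hfar'⟩ := exists_far_companion hfix hff hv hinv hfar
    refine ⟨(ofMap f').inH x', (hv.mono ?_).option_elim hinv (fun c => ?_) hval (fun b hb => ?_)
      fun i b hb => iff_of_false (hfar i b hb) (hfar' i b hb)⟩
    · exact (Finset.subset_mul_left _ h1).trans (Finset.subset_mul_left _ h1)
    · exact iff_of_false (inH_ne_inF _ _) (inH_ne_inF _ _)
    · simpa only [smul_inH, inH_inj] using hself b hb
  · exact absurd ⟨(ofMap f').inF c, Or.inl ⟨c, rfl, rfl⟩⟩ hu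

lemma Similar.sumElim_snoc {α : Type*} {n : ℕ} {v : α → (ofMap f).carrier}
    {v' : α → (ofMap f').carrier} {xs : Fin n → (ofMap f).carrier}
    {xs' : Fin n → (ofMap f').carrier}
    (h : Similar B (fun o : Option (α ⊕ Fin n) => o.elim u (Sum.elim v xs))
      fun o => o.elim u' (Sum.elim v' xs')) :
    Similar B (Sum.elim v (Fin.snoc xs u)) (Sum.elim v' (Fin.snoc xs' u')) := by
  rw [sumElim_snoc_eq_comp v, sumElim_snoc_eq_comp v']
  exact h.comp _

lemma exists_realize_boundedFormula_iff {α : Type*} [Finite α]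
    (hfix : ∀ g : GQ, g ≠ 1 → (MulAction.fixedBy H g).Subsingleton) {n : ℕ}
    (φ : JLang.BoundedFormula α n) :
    ∃ B : Finset GQ, ∀ ⦃f f' : H → F⦄, LocallyEquivalent f f' →
      ∀ ⦃v : α → (ofMap f).carrier⦄ ⦃v' : α → (ofMap f').carrier⦄ ⦃xs : Fin n → (ofMap f).carrier⦄
        ⦃xs' : Fin n → (ofMap f').carrier⦄,
        Similar B (Sum.elim v xs) (Sum.elim v' xs') → (φ.Realize v xs ↔ φ.Realize v' xs') := by
  induction φ with
  | falsum => exact ⟨∅, fun _ _ _ _ _ _ _ _ => Iff.rfl⟩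
  | @equal n t s =>
    obtain ⟨B, hB⟩ := exists_corresponds_realize (H := H) (F := F) t
    obtain ⟨C, hC⟩ := exists_corresponds_realize (H := H) (F := F) s
    refine ⟨B ∪ C ∪ C⁻¹ * B, fun _ _ _ _ _ _ _ h => ?_⟩
    have hBC := h.mono Finset.subset_union_left
    exact (hB (hBC.mono Finset.subset_union_left)).eq_iff (hC (hBC.mono Finset.subset_union_right))
      (h.mono Finset.subset_union_right)
  | @rel n l R ts =>
    cases R
    obtain ⟨B, hB⟩ := exists_corresponds_realize (H := H) (F := F) (ts 0)
    refine ⟨B, fun f f' _ v v' xs xs' h => ?_⟩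
    have hsort := not_congr (exists_congr ((hB h).eq_inF_iff h))
    exact (relMap_isH (x := fun i => (ts i).realize (Sum.elim v xs))).trans
      (hsort.trans (relMap_isH (x := fun i => (ts i).realize (Sum.elim v' xs'))).symm)
  | @imp n φ ψ ihφ ihψ =>
    obtain ⟨B, hB⟩ := ihφ
    obtain ⟨C, hC⟩ := ihψ
    exact ⟨B ∪ C, fun _ _ hff _ _ _ _ h =>
      imp_congr (hB hff (h.mono Finset.subset_union_left))
        (hC hff (h.mono Finset.subset_union_right))⟩
  | @all n φ ih =>
    obtain ⟨B, hB⟩ := ih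
    obtain ⟨C, hBC, h1, hinv⟩ := exists_symmetric_superset B
    refine ⟨C * C * C, fun f f' hff v v' xs xs' h => ⟨fun hφ u' => ?_, fun hφ u => ?_⟩⟩
    · obtain ⟨u, hu⟩ := h.symm.exists_extension hfix hff.symm h1 hinv u'
      exact (hB hff (hu.symm.sumElim_snoc.mono hBC)).1 (hφ u)
    · obtain ⟨u', hu⟩ := h.exists_extension hfix hff h1 hinv u
      exact (hB hff (hu.sumElim_snoc.mono hBC)).2 (hφ u')

lemma exists_realize_formula_iff {α : Type*} [Finite α]
    (hfix : ∀ g : GQ, g ≠ 1 → (MulAction.fixedBy H g).Subsingleton) (φ : JLang.Formula α) :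
    ∃ B : Finset GQ, ∀ ⦃f f' : H → F⦄, LocallyEquivalent f f' →
      ∀ ⦃v : α → (ofMap f).carrier⦄ ⦃v' : α → (ofMap f').carrier⦄,
        Similar B v v' → (φ.Realize v ↔ φ.Realize v') := by
  obtain ⟨B, hB⟩ := exists_realize_boundedFormula_iff (H := H) (F := F) hfix φ
  have helim {X : Type} (w : α → X) (xs : Fin 0 → X) :
      Sum.elim w xs = w ∘ Sum.elim id Fin.elim0 := by
    ext1 (a | i)
    exacts [rfl, i.elim0]
  refine ⟨B, fun f f' hff v v' h => hB hff ?_⟩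
  rw [helim v, helim v']
  exact h.comp _

end BackAndForth

/-! ### Limits of modular translates along ultrafilters -/

open Filter

lemma jFunction_sl2ZHom_smul (γ : SL(2, ℤ)) (x : ℍ) :
    jFunction (sl2ZHom γ • x) = jFunction x := by
  rw [sl2ZHom_smul, jFunction_smul]

lemma exists_finiteIndex_jFunction_smul_eq (B : Finset GQ) :
    ∃ U : Subgroup SL(2, ℤ), U.Normal ∧ U.FiniteIndex ∧
      ∀ γ ∈ U, ∀ b ∈ B, ∀ x : ℍ, jFunction (b • sl2ZHom γ • x) = jFunction (b • x) := by
  choose N hN0 hN using exists_Gamma_conj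
  have (b : B) : NeZero (N b) := ⟨hN0 b⟩
  refine ⟨⨅ b : B, CongruenceSubgroup.Gamma (N b),
    Subgroup.normal_iInf_normal fun b => CongruenceSubgroup.Gamma_normal _,
    Subgroup.finiteIndex_iInf fun b => inferInstance, fun γ hγ b hb x => ?_⟩
  obtain ⟨δ, hδ⟩ := hN b γ (Subgroup.mem_iInf.1 hγ ⟨b, hb⟩)
  rw [← mul_smul, hδ, mul_smul, jFunction_sl2ZHom_smul]

lemma exists_eventually_inv_mul_mem {G α : Type*} [Group G] (U : Subgroup G) [U.FiniteIndex]
    (𝒰 : Ultrafilter α) (u : α → G) : ∃ δ, ∀ᶠ a in 𝒰, δ⁻¹ * u a ∈ U := by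
  obtain ⟨q, hq⟩ := (𝒰.map fun a => (u a : G ⧸ U)).eq_pure_of_finite
  obtain ⟨δ, rfl⟩ := QuotientGroup.mk_surjective q
  have hδ : ∀ᶠ a in 𝒰, (u a : G ⧸ U) = δ := by
    have : {(δ : G ⧸ U)} ∈ 𝒰.map fun a => (u a : G ⧸ U) := hq ▸ Set.mem_singleton _
    exact Ultrafilter.mem_map.1 this
  exact ⟨δ, hδ.mono fun a ha => QuotientGroup.eq.1 ha.symm⟩

lemma T_pow_smul_injective (u : ℍ) :
    Function.Injective fun k : ℕ => sl2ZHom (ModularGroup.T ^ k) • u := by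
  intro a b hab
  have htranslate (k : ℕ) : sl2ZHom (ModularGroup.T ^ k) • u = (k : ℝ) +ᵥ u := by
    rw [sl2ZHom_smul, ← zpow_natCast, UpperHalfPlane.modular_T_zpow_smul, Int.cast_natCast]
  simp only [htranslate] at hab
  simpa only [UpperHalfPlane.vadd_re, add_left_inj, Nat.cast_inj] using
    congrArg UpperHalfPlane.re hab

lemma infinite_image_sl2ZHom_smul (U : Subgroup SL(2, ℤ)) [U.Normal] [U.FiniteIndex] (g : GQ)
    (u : ℍ) : ((fun γ => g • sl2ZHom γ • u) '' (U : Set SL(2, ℤ))).Infinite := by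
  have hinj : Function.Injective fun k : ℕ => g • sl2ZHom (ModularGroup.T ^ (U.index * k)) • u :=
    (MulAction.injective g).comp <| (T_pow_smul_injective u).comp <|
      mul_right_injective₀ Subgroup.FiniteIndex.index_ne_zero
  refine Set.infinite_of_injective_forall_mem hinj fun k => ⟨_, ?_, rfl⟩
  rw [pow_mul]
  exact U.pow_mem (U.pow_index_mem _) k

lemma infinite_setOf_jFunction_eq {f : ℍ → ℂ} {B : Finset GQ} {x u : ℍ}
    (hu : ∀ b ∈ B, f (b • x) = jFunction (b • u)) :
    {x' | ∀ b ∈ B, jFunction (b • x') = f (b • x)}.Infinite := by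
  obtain ⟨U, _, _, hinv⟩ := exists_finiteIndex_jFunction_smul_eq B
  refine (infinite_image_sl2ZHom_smul U 1 u).mono ?_
  rintro _ ⟨ε, hε, rfl⟩ b hb
  simp only [one_smul, hinv ε hε b hb, hu b hb]

lemma locallyEquivalent_jFunction : LocallyEquivalent jFunction jFunction where
  fixed _ _ := rfl
  forth _ _ := infinite_setOf_jFunction_eq fun _ _ => rfl
  back _ _ := infinite_setOf_jFunction_eq fun _ _ => rfl

section Limit

variable {ι : Type*} {τ : ι → ℍ}

/-- The parametrization of the union of the `G`-orbits of the entries of a tuple. -/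
def orbitMap (τ : ι → ℍ) (p : ι × GQ) : ℍ := p.2 • τ p.1

/-- A tuple in `ℍ` is free if the only relation between its entries given by an element of `G`
is the trivial one. -/
def IsFree (τ : ι → ℍ) : Prop := Function.Injective (orbitMap τ)

lemma exists_eq_smul_or_notMem (τ : ι → ℍ) (x : ℍ) :
    (∃ i, ∃ g : GQ, x = g • τ i) ∨ x ∉ Set.range (orbitMap τ) := by
  by_cases hx : x ∈ Set.range (orbitMap τ)
  · obtain ⟨⟨i, g⟩, rfl⟩ := hx
    exact Or.inl ⟨i, g, rfl⟩
  · exact Or.inr hx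

lemma smul_notMem_range_orbitMap {x : ℍ} (hx : x ∉ Set.range (orbitMap τ)) (b : GQ) :
    b • x ∉ Set.range (orbitMap τ) := by
  rintro ⟨⟨i, g⟩, h⟩
  exact hx ⟨(i, b⁻¹ * g), by rw [orbitMap, mul_smul, inv_smul_eq_iff]; exact h⟩

lemma IsFree.smul (hτ : IsFree τ) (a : ι → GQ) : IsFree fun i => a i • τ i := by
  rintro ⟨i, g⟩ ⟨k, h⟩ hgh
  have hτgh : (i, g * a i) = (k, h * a k) := hτ (by
    simpa only [orbitMap, mul_smul] using hgh)
  obtain ⟨rfl, hga⟩ := Prod.mk.inj hτgh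
  rw [mul_right_cancel hga]

lemma IsFree.smul_eq_iff (hτ : IsFree τ) {g : GQ} {i k : ι} :
    g • τ i = τ k ↔ i = k ∧ g = 1 := by
  refine ⟨fun h => Prod.mk.inj (hτ (a₁ := (i, g)) (a₂ := (k, 1)) ?_), ?_⟩
  · simpa only [orbitMap, one_smul] using h
  · rintro ⟨rfl, rfl⟩
    exact one_smul GQ _

lemma IsFree.notMem_range_orbitMap (hτ : IsFree τ) {x : ℍ} {g : GQ} (hg : g ≠ 1)
    (hgx : g • x = x) : x ∉ Set.range (orbitMap τ) := by
  rintro ⟨⟨i, h⟩, rfl⟩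
  exact hg ((hτ.smul fun _ => h).smul_eq_iff.1 hgx).2

lemma IsFree.similar {τ' : ι → ℍ} (hτ : IsFree τ) (hτ' : IsFree τ') {B : Finset GQ} {f f' : ℍ → ℂ}
    (h : ∀ i, ∀ b ∈ B, f (b • τ i) = f' (b • τ' i)) :
    Similar B (fun i => (ofMap f).inH (τ i)) fun i => (ofMap f').inH (τ' i) where
  field _ _ := iff_of_false (inH_ne_inF _ _) (inH_ne_inF _ _)
  val := h
  rel i k b _ := by rw [smul_inH, smul_inH, inH_inj, inH_inj, hτ.smul_eq_iff, hτ'.smul_eq_iff]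

/-- For a free tuple `τ`, the `G`-equivariant map which sends `τ i` to `γ i • τ i` and fixes the
points outside the orbits of the entries. -/
def orbitTwist (τ : ι → ℍ) (γ : ι → SL(2, ℤ)) : ℍ → ℍ :=
  Function.extend (orbitMap τ) (orbitMap fun i => sl2ZHom (γ i) • τ i) id

lemma orbitTwist_smul_apply (hτ : IsFree τ) (γ : ι → SL(2, ℤ)) (i : ι) (g : GQ) :
    orbitTwist τ γ (g • τ i) = g • sl2ZHom (γ i) • τ i :=
  hτ.extend_apply _ _ (i, g)

lemma orbitTwist_of_notMem {x : ℍ} (hx : x ∉ Set.range (orbitMap τ)) (γ : ι → SL(2, ℤ)) :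
    orbitTwist τ γ x = x :=
  Function.extend_apply' _ _ _ hx

lemma orbitTwist_smul (hτ : IsFree τ) (γ : ι → SL(2, ℤ)) (b : GQ) (x : ℍ) :
    orbitTwist τ γ (b • x) = b • orbitTwist τ γ x := by
  rcases exists_eq_smul_or_notMem τ x with ⟨i, g, rfl⟩ | hx
  · rw [← mul_smul, orbitTwist_smul_apply hτ, orbitTwist_smul_apply hτ, mul_smul]
  · rw [orbitTwist_of_notMem hx, orbitTwist_of_notMem (smul_notMem_range_orbitMap hx b)]

lemma orbitTwist_injective (hτ : IsFree τ) (γ : ι → SL(2, ℤ)) :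
    Function.Injective (orbitTwist τ γ) := by
  have hne {i : ι} {g : GQ} {y : ℍ} (hy : y ∉ Set.range (orbitMap τ)) :
      g • sl2ZHom (γ i) • τ i ≠ y := fun h =>
    hy ⟨(i, g * sl2ZHom (γ i)), (mul_smul g (sl2ZHom (γ i)) (τ i)).trans h⟩
  intro x y hxy
  rcases exists_eq_smul_or_notMem τ x with ⟨i, g, rfl⟩ | hx <;>
    rcases exists_eq_smul_or_notMem τ y with ⟨k, h, rfl⟩ | hy
  · rw [orbitTwist_smul_apply hτ, orbitTwist_smul_apply hτ] at hxy
    obtain ⟨rfl, rfl⟩ := Prod.mk.inj (hτ.smul (fun i => sl2ZHom (γ i)) (a₁ := (i, g))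
      (a₂ := (k, h)) hxy)
    rfl
  · rw [orbitTwist_smul_apply hτ, orbitTwist_of_notMem hy] at hxy
    exact absurd hxy (hne hy)
  · rw [orbitTwist_smul_apply hτ, orbitTwist_of_notMem hx] at hxy
    exact absurd hxy.symm (hne hx)
  · rwa [orbitTwist_of_notMem hx, orbitTwist_of_notMem hy] at hxy

/-- A function is a limit if at each point it takes the value which the maps `j ∘ orbitTwist τ γ`
eventually take along the ultrafilter. -/
def IsLimit (τ : ι → ℍ) (𝒰 : Ultrafilter (ι → SL(2, ℤ))) (f : ℍ → ℂ) : Prop :=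
  ∀ x, ∀ᶠ γ in 𝒰, f x = jFunction (orbitTwist τ γ x)

variable {𝒰 : Ultrafilter (ι → SL(2, ℤ))} {f : ℍ → ℂ}

/-- For fixed `g`, `j (g • γ • τ i)` depends only on the coset of `γ` modulo a subgroup of finite
index. -/
lemma exists_isLimit (hτ : IsFree τ) (𝒰 : Ultrafilter (ι → SL(2, ℤ))) : ∃ f, IsLimit τ 𝒰 f := by
  suffices h : ∀ x, ∃ c, ∀ᶠ γ in 𝒰, c = jFunction (orbitTwist τ γ x) by
    choose f hf using h
    exact ⟨f, hf⟩
  intro x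
  rcases exists_eq_smul_or_notMem τ x with ⟨i, g, rfl⟩ | hx
  · obtain ⟨U, hU, _, hinv⟩ := exists_finiteIndex_jFunction_smul_eq {g}
    obtain ⟨δ, hδ⟩ := exists_eventually_inv_mul_mem U 𝒰 fun γ => γ i
    refine ⟨jFunction (g • sl2ZHom δ • τ i), ?_⟩
    filter_upwards [hδ] with γ hγ
    have hγδ : γ i * δ⁻¹ ∈ U := hU.mem_comm hγ
    have hj := hinv _ hγδ g (Finset.mem_singleton_self g) (sl2ZHom δ • τ i)
    rw [orbitTwist_smul_apply hτ, ← hj, ← mul_smul (sl2ZHom _), ← map_mul, inv_mul_cancel_right]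
  · exact ⟨jFunction x, Eventually.of_forall fun γ => by rw [orbitTwist_of_notMem hx]⟩

lemma IsLimit.eventually_forall_smul (hf : IsLimit τ 𝒰 f) (hτ : IsFree τ) (x : ℍ)
    (B : Finset GQ) : ∀ᶠ γ in 𝒰, ∀ b ∈ B, f (b • x) = jFunction (b • orbitTwist τ γ x) :=
  (Finset.eventually_all B).2 fun b _ => by
    simpa only [orbitTwist_smul hτ] using hf (b • x)

lemma IsLimit.eq_of_notMem (hf : IsLimit τ 𝒰 f) {x : ℍ} (hx : x ∉ Set.range (orbitMap τ)) :
    f x = jFunction x := by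
  obtain ⟨γ, hγ⟩ := (hf x).exists
  rwa [orbitTwist_of_notMem hx] at hγ

lemma IsLimit.infinite_setOf_eq_jFunction (hf : IsLimit τ 𝒰 f) (hτ : IsFree τ) (x : ℍ)
    (B : Finset GQ) : {x' | ∀ b ∈ B, f (b • x') = jFunction (b • x)}.Infinite := by
  rcases exists_eq_smul_or_notMem τ x with ⟨i, g, rfl⟩ | hx
  · obtain ⟨U, _, _, hinv⟩ := exists_finiteIndex_jFunction_smul_eq (B.image (· * g))
    obtain ⟨δ, hδ⟩ := exists_eventually_inv_mul_mem U 𝒰 fun γ => γ i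
    refine (infinite_image_sl2ZHom_smul U g (sl2ZHom δ⁻¹ • τ i)).mono ?_
    rintro _ ⟨ε, hε, rfl⟩ b hb
    have hbg : b * g ∈ B.image (· * g) := Finset.mem_image_of_mem _ hb
    obtain ⟨γ, hγ, hδγ⟩ := ((hf ((b * g * sl2ZHom ε * sl2ZHom δ⁻¹) • τ i)).and hδ).exists
    calc f (b • g • sl2ZHom ε • sl2ZHom δ⁻¹ • τ i)
      _ = f ((b * g * sl2ZHom ε * sl2ZHom δ⁻¹) • τ i) := by simp only [mul_smul]
      _ = jFunction ((b * g) • sl2ZHom ε • sl2ZHom (δ⁻¹ * γ i) • τ i) := by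
        rw [hγ, orbitTwist_smul_apply hτ]
        simp only [mul_smul, map_mul]
      _ = jFunction ((b * g) • τ i) := by rw [hinv ε hε _ hbg, hinv _ hδγ _ hbg]
      _ = jFunction (b • g • τ i) := by rw [mul_smul]
  · obtain ⟨U, _, _, hinv⟩ := exists_finiteIndex_jFunction_smul_eq B
    refine (infinite_image_sl2ZHom_smul U 1 x).mono ?_
    rintro _ ⟨ε, hε, rfl⟩ b hb
    simp only [one_smul]
    rw [← hinv ε hε b hb x]
    exact hf.eq_of_notMem (smul_notMem_range_orbitMap (smul_notMem_range_orbitMap hx _) b)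

lemma IsLimit.locallyEquivalent (hf : IsLimit τ 𝒰 f) (hτ : IsFree τ) :
    LocallyEquivalent f jFunction where
  fixed _ := fun ⟨_, hg, hgx⟩ => hf.eq_of_notMem (hτ.notMem_range_orbitMap hg hgx)
  forth x B := infinite_setOf_jFunction_eq (hf.eventually_forall_smul hτ x B).exists.choose_spec
  back := hf.infinite_setOf_eq_jFunction hτ

lemma IsLimit.standardFibres (hf : IsLimit τ 𝒰 f) (hτ : IsFree τ) : StandardFibres (ofMap f) := by
  intro x y hxy
  obtain ⟨γ, hx, hy⟩ := ((hf x).and (hf y)).exists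
  obtain ⟨δ, hδ⟩ := jFunction_eq_iff.1 (hx.symm.trans (hxy.trans hy))
  rw [← orbitTwist_smul hτ] at hδ
  exact ⟨δ, orbitTwist_injective hτ γ hδ⟩

lemma IsLimit.apply_eq (hf : IsLimit τ 𝒰 f) (hτ : IsFree τ) (i : ι) :
    f (τ i) = jFunction (τ i) := by
  obtain ⟨γ, hγ⟩ := (hf ((1 : GQ) • τ i)).exists
  rwa [orbitTwist_smul_apply hτ, one_smul, one_smul, jFunction_sl2ZHom_smul] at hγ

end Limit

lemma isFree_of_gIndependent {n : ℕ} {τ : Fin n → ℍ}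
    (hτ : stdModel.GIndependent (show Fin n → stdModel.H from τ)) :
    IsFree τ := by
  rintro ⟨i, g⟩ ⟨k, h⟩ hgh
  have hik : (h⁻¹ * g) • τ i = τ k := by rw [mul_smul, inv_smul_eq_iff]; exact hgh
  obtain rfl : i = k := by
    by_contra hne
    exact hτ.2 i k hne ⟨_, hik⟩
  have hg : h⁻¹ * g = 1 := by
    by_contra hne
    exact hτ.1 i ⟨_, hne, hik⟩
  rw [inv_mul_eq_one.1 hg]

lemma LocallyEquivalent.modelsThJ {f : ℍ → ℂ} (hf : LocallyEquivalent f jFunction) :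
    ModelsThJ (ofMap f) := by
  refine (Theory.model_iff _).2 fun φ hφ => ?_
  obtain ⟨B, hB⟩ := exists_realize_formula_iff (F := ℂ) (fun _ => subsingleton_fixedBy) φ
  exact (hB hf ⟨isEmptyElim, isEmptyElim, isEmptyElim⟩).2 hφ

/-! ### The set of types above a fibre as a closure -/

open Topology

section Types

variable {n : ℕ} {τ : Fin n → ℍ}

/-- The complete type of a tuple in the `H`-sort, encoded as a point of the Cantor space of Boolean
functions on the set of formulas. -/
def typeOf (M : JPreModel) (x : Fin n → M.H) (φ : JLang.Formula (Fin n)) : Bool :=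
  decide (φ.Realize fun i => M.inH (x i))

lemma typeOf_eq_true_iff {M : JPreModel} {x : Fin n → M.H} {φ : JLang.Formula (Fin n)} :
    typeOf M x φ = true ↔ φ.Realize fun i => M.inH (x i) :=
  decide_eq_true_iff

/-- The type in the standard model of the tuple obtained from `τ` by moving each entry by an element
of `SL₂(ℤ)`. -/
def translateType (τ : Fin n → ℍ) (γ : Fin n → SL(2, ℤ)) : JLang.Formula (Fin n) → Bool :=
  typeOf (ofMap jFunction) fun i => sl2ZHom (γ i) • τ i

lemma exists_typeOf_eq (φ : JLang.Formula (Fin n)) :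
    ∃ B : Finset GQ, ∀ ⦃f f' : ℍ → ℂ⦄, LocallyEquivalent f f' →
      ∀ ⦃x x' : Fin n → ℍ⦄, IsFree x → IsFree x' →
        (∀ i, ∀ b ∈ B, f (b • x i) = f' (b • x' i)) →
          typeOf (ofMap f) x φ = typeOf (ofMap f') x' φ := by
  obtain ⟨B, hB⟩ := exists_realize_formula_iff (F := ℂ) (fun _ => subsingleton_fixedBy) φ
  exact ⟨B, fun _ _ hff _ _ hx hx' h => decide_eq_decide.2 (hB hff (hx.similar hx' h))⟩

lemma similar_inF {ι : Type*} {H F : Type} [MulAction GQ H] [Field F] (f f' : H → F) (B : Finset GQ)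
    (c : ι → F) : Similar B (fun i => (ofMap f).inF (c i)) fun i => (ofMap f').inF (c i) where
  field _ _ := by rw [inF_inj, inF_inj]
  val _ _ _ := rfl
  rel _ _ _ _ := by rw [smul_inF, smul_inF, inF_inj, inF_inj]

lemma LocallyEquivalent.realize_inF_iff {f f' : ℍ → ℂ} (h : LocallyEquivalent f f')
    (φ : JLang.Formula (Fin n)) (c : Fin n → ℂ) :
    φ.Realize (fun i => (ofMap f).inF (c i)) ↔ φ.Realize fun i => (ofMap f').inF (c i) := by
  obtain ⟨B, hB⟩ := exists_realize_formula_iff (F := ℂ) (fun _ => subsingleton_fixedBy) φ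
  exact hB h (similar_inF f f' B c)

section

variable {𝒰 : Ultrafilter (Fin n → SL(2, ℤ))} {f : ℍ → ℂ}

lemma IsLimit.tendsto_translateType (hf : IsLimit τ 𝒰 f) (hτ : IsFree τ) :
    Tendsto (translateType τ) 𝒰 (𝓝 (typeOf (ofMap f) τ)) := by
  refine tendsto_pi_nhds.2 fun φ => tendsto_nhds_of_eventually_eq ?_
  obtain ⟨B, hB⟩ := exists_typeOf_eq φ
  filter_upwards [eventually_all.2 fun i => hf.eventually_forall_smul hτ (τ i) B] with γ hγ
  have htwist (i : Fin n) : orbitTwist τ γ (τ i) = sl2ZHom (γ i) • τ i := by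
    simpa only [one_smul] using orbitTwist_smul_apply hτ γ i 1
  refine (hB (hf.locallyEquivalent hτ) hτ (hτ.smul _) fun i b hb => ?_).symm
  rw [hγ i b hb, htwist]

lemma IsLimit.setOf_typeOf_mem (hf : IsLimit τ 𝒰 f) (hτ : IsFree τ) :
    {φ | typeOf (ofMap f) τ φ = true} ∈ typesAboveFibre fun i => jFunction (τ i) := by
  have hff := hf.locallyEquivalent hτ
  refine ⟨ofMap f, hff.modelsThJ, hf.standardFibres hτ, τ, fun φ => ?_,
    Set.ext fun φ => typeOf_eq_true_iff⟩
  simp only [hf.apply_eq hτ]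
  exact hff.realize_inF_iff φ fun i => jFunction (τ i)

end

lemma setOf_eq_true_mem_typesAboveFibre (hτ : IsFree τ) {t : JLang.Formula (Fin n) → Bool}
    (ht : t ∈ closure (Set.range (translateType τ))) :
    {φ | t φ = true} ∈ typesAboveFibre fun i => jFunction (τ i) := by
  have hne : (comap (translateType τ) (𝓝 t)).NeBot :=
    comap_neBot_iff_frequently.2 (mem_closure_iff_frequently.1 ht)
  obtain ⟨f, hf⟩ := exists_isLimit hτ (Ultrafilter.of (comap (translateType τ) (𝓝 t)))
  have hlim : Tendsto (translateType τ) (Ultrafilter.of (comap (translateType τ) (𝓝 t))) (𝓝 t) :=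
    tendsto_iff_comap.2 (Ultrafilter.of_le _)
  rw [tendsto_nhds_unique hlim (hf.tendsto_translateType hτ)]
  exact hf.setOf_typeOf_mem hτ

/-- The formula expressing that a tuple of the field sort is the image under `j` of a tuple of
the `H`-sort satisfying a given formula. -/
def imageFormula (φ : JLang.Formula (Fin n)) : JLang.Formula (Fin n) :=
  Formula.iExs (Fin n) (φ.relabel Sum.inr ⊓
    Formula.iInf fun i : Fin n =>
      Relations.formula (JRel.isH : JLang.Relations 1) (fun _ => Term.var (Sum.inr i)) ⊓
      Term.equal (Term.func (JFun.jmap : JLang.Functions 1) fun _ => Term.var (Sum.inr i))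
        (Term.var (Sum.inl i)))

lemma realize_imageFormula {M : JPreModel} {φ : JLang.Formula (Fin n)} {z : Fin n → M.F} :
    (imageFormula φ).Realize (fun i => M.inF (z i)) ↔
      ∃ x : Fin n → M.H, φ.Realize (fun i => M.inH (x i)) ∧ ∀ i, M.j (x i) = z i := by
  have hjmap (v : Fin n ⊕ Fin n → M.carrier) (i : Fin n) :
      (Term.func (L := JLang) (JFun.jmap : JLang.Functions 1)
        fun _ => Term.var (Sum.inr i)).realize v = M.inF (M.jval (v (Sum.inr i))) :=
    realize_jmap v fun _ => Term.var (Sum.inr i)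
  simp only [imageFormula, Formula.realize_iExs, Formula.realize_inf, Formula.realize_relabel,
    Formula.realize_iInf, Formula.realize_equal, Term.realize_var, hjmap, Sum.elim_comp_inr,
    Sum.elim_inl, Sum.elim_inr, inF_inj]
  constructor
  · rintro ⟨u, hu, h⟩
    choose x hx using fun i => (exists_inH_or_exists_inF (u i)).resolve_right
      (relMap_isH.1 (h i).1)
    obtain rfl : u = fun i => M.inH (x i) := funext hx
    exact ⟨x, hu, fun i => (h i).2⟩
  · rintro ⟨x, hx, h⟩
    exact ⟨fun i => M.inH (x i), hx, fun i =>
      ⟨relMap_isH.2 fun ⟨c, hc⟩ => inH_ne_inF _ _ hc, h i⟩⟩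

lemma mem_closure_range_of_forall_finset {X Φ : Type*} {P : X → Φ → Bool} {t : Φ → Bool}
    (h : ∀ S : Finset Φ, ∃ x, ∀ φ ∈ S, P x φ = t φ) : t ∈ closure (Set.range P) := by
  refine mem_closure_iff_nhds.2 fun W hW => ?_
  rw [nhds_pi, mem_pi'] at hW
  obtain ⟨S, V, hV, hVW⟩ := hW
  obtain ⟨x, hx⟩ := h S
  exact ⟨P x, hVW fun φ hφ => hx φ hφ ▸ mem_of_mem_nhds (hV φ), x, rfl⟩

lemma exists_formula_realize_iff_typeOf_eq (t : JLang.Formula (Fin n) → Bool)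
    (S : Finset (JLang.Formula (Fin n))) :
    ∃ ψ : JLang.Formula (Fin n), ∀ (M : JPreModel) (x : Fin n → M.H),
      ψ.Realize (fun i => M.inH (x i)) ↔ ∀ φ ∈ S, typeOf M x φ = t φ := by
  refine ⟨Formula.iInf fun φ : S => if t φ then φ.1 else φ.1.not, fun M x => ?_⟩
  rw [Formula.realize_iInf, Subtype.forall]
  refine forall₂_congr fun φ _ => ?_
  cases ht : t φ
  · simp [typeOf]
  · simp [typeOf]

lemma exists_mem_closure_of_mem_typesAboveFibre {p : Set (JLang.Formula (Fin n))}
    (hp : p ∈ typesAboveFibre fun i => jFunction (τ i)) :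
    ∃ t ∈ closure (Set.range (translateType τ)), {φ | t φ = true} = p := by
  obtain ⟨M, -, -, τ', hτ', rfl⟩ := hp
  refine ⟨typeOf M τ', mem_closure_range_of_forall_finset fun S => ?_,
    Set.ext fun φ => typeOf_eq_true_iff⟩
  obtain ⟨ψ, hψ⟩ := exists_formula_realize_iff_typeOf_eq (typeOf M τ') S
  have hstd := (hτ' _).1 (realize_imageFormula.2 ⟨τ', (hψ M τ').2 fun _ _ => rfl, fun _ => rfl⟩)
  obtain ⟨x, hx, hjx⟩ := realize_imageFormula.1 hstd
  choose γ hγ using fun i => jFunction_eq_iff.1 (hjx i)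
  obtain rfl : (fun i => sl2ZHom (γ i) • τ i) = x := funext hγ
  exact ⟨γ, (hψ stdModel _).1 hx⟩

theorem typesAboveFibre_eq_image_closure (hτ : IsFree τ) :
    (typesAboveFibre fun i => jFunction (τ i)) =
      (fun t => {φ | t φ = true}) '' closure (Set.range (translateType τ)) := by
  refine Set.Subset.antisymm (fun p hp => exists_mem_closure_of_mem_typesAboveFibre hp) ?_
  rintro _ ⟨t, ht, rfl⟩
  exact setOf_eq_true_mem_typesAboveFibre hτ ht

lemma exists_finiteIndex_translateType_mul_eq (hτ : IsFree τ) (φ : JLang.Formula (Fin n)) :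
    ∃ U : Subgroup (Fin n → SL(2, ℤ)), U.FiniteIndex ∧
      ∀ γ, ∀ ε ∈ U, translateType τ (γ * ε) φ = translateType τ γ φ := by
  obtain ⟨B, hB⟩ := exists_typeOf_eq φ
  obtain ⟨U, hU, _, hinv⟩ := exists_finiteIndex_jFunction_smul_eq B
  have hindex (i : Fin n) :
      (U.comap (Pi.evalMonoidHom (fun _ : Fin n => SL(2, ℤ)) i)).FiniteIndex :=
    ⟨by
      rw [Subgroup.index_comap_of_surjective _ (Function.surjective_eval i)]
      exact Subgroup.FiniteIndex.index_ne_zero⟩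
  refine ⟨⨅ i, U.comap (Pi.evalMonoidHom _ i), Subgroup.finiteIndex_iInf hindex,
    fun γ ε hε => hB locallyEquivalent_jFunction (hτ.smul _) (hτ.smul _) fun i b hb => ?_⟩
  have hεi : ε i ∈ U := Subgroup.mem_iInf.1 hε i
  have hj := hinv _ (hU.conj_mem _ hεi (γ i)) b hb (sl2ZHom (γ i) • τ i)
  rwa [← mul_smul (sl2ZHom _), ← map_mul, inv_mul_cancel_right] at hj

lemma translateType_mul (τ : Fin n → ℍ) (δ γ : Fin n → SL(2, ℤ)) (φ : JLang.Formula (Fin n)) :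
    translateType τ (δ * γ) φ = translateType τ γ (BoundedFormula.subst φ fun i =>
      Term.func (JFun.act (sl2ZHom (δ i)) : JLang.Functions 1) fun _ => Term.var i) := by
  have hτ : (fun i => sl2ZHom ((δ * γ) i) • τ i) = fun i => sl2ZHom (δ i) • sl2ZHom (γ i) • τ i :=
    funext fun i => by rw [Pi.mul_apply, map_mul, mul_smul]
  have hsubst := BoundedFormula.realize_subst (M := (ofMap jFunction).carrier) (φ := φ)
    (tf := fun i => Term.func (JFun.act (sl2ZHom (δ i)) : JLang.Functions 1) fun _ => Term.var i)
    (v := fun i => (ofMap jFunction).inH (sl2ZHom (γ i) • τ i)) (xs := default)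
  rw [translateType, hτ]
  exact decide_eq_decide.2 hsubst.symm

end Types

/-! ### Counting -/

section Dichotomy

lemma finite_range_of_forall_mul_eq {G X : Type*} [Group G] {U : Subgroup G} [U.FiniteIndex]
    {P : G → X} (h : ∀ γ, ∀ ε ∈ U, P (γ * ε) = P γ) : (Set.range P).Finite := by
  refine (Set.finite_range fun q : G ⧸ U => P q.out).subset ?_
  rintro _ ⟨γ, rfl⟩
  obtain ⟨ε, hε⟩ := QuotientGroup.mk_out_eq_mul U γ
  exact ⟨γ, (congrArg P hε).trans (h γ ε ε.2)⟩

variable {G Φ : Type*} [Group G] {P : G → Φ → Bool}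

/-- If `P γ` were isolated in the range, `P` would be constant on a coset `γ * U` of a subgroup of
finite index, and by left translation on every left coset of `U`. -/
lemma preperfect_range_of_infinite
    (hcont : ∀ φ, ∃ U : Subgroup G, U.FiniteIndex ∧ ∀ γ, ∀ ε ∈ U, P (γ * ε) φ = P γ φ)
    (hmul : ∀ δ γ γ', P γ = P γ' → P (δ * γ) = P (δ * γ')) (hinf : (Set.range P).Infinite) :
    Preperfect (Set.range P) := by
  refine preperfect_iff_nhds.2 ?_
  rintro _ ⟨γ, rfl⟩ W hW
  rw [nhds_pi, mem_pi'] at hW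
  obtain ⟨S, V, hV, hVW⟩ := hW
  choose U hU hPU using hcont
  have hcoset : ∀ ε ∈ ⨅ φ : S, U φ, P (γ * ε) ∈ W := fun ε hε => hVW fun φ hφ => by
    rw [hPU φ γ ε (Subgroup.mem_iInf.1 hε ⟨φ, hφ⟩)]
    exact mem_of_mem_nhds (hV φ)
  by_contra! hisolated
  have hconst : ∀ ε ∈ ⨅ φ : S, U φ, P (γ * ε) = P γ := fun ε hε =>
    hisolated _ ⟨hcoset ε hε, _, rfl⟩
  have : (⨅ φ : S, U φ).FiniteIndex := Subgroup.finiteIndex_iInf fun φ : S => hU φ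
  refine hinf (finite_range_of_forall_mul_eq (U := ⨅ φ : S, U φ) fun δ ε hε => ?_)
  simpa only [← mul_assoc, inv_mul_cancel_right] using hmul (δ * γ⁻¹) _ _ (hconst ε hε)

lemma mk_eq_continuum_of_perfect [Countable Φ] {C : Set (Φ → Bool)} (hC : Perfect C)
    (hne : C.Nonempty) : Cardinal.mk C = Cardinal.continuum := by
  apply le_antisymm
  · calc Cardinal.mk C
      _ ≤ Cardinal.mk (Φ → Bool) := Cardinal.mk_set_le C
      _ = 2 ^ Cardinal.mk Φ := by
        rw [Cardinal.mk_pi, Cardinal.mk_bool, Cardinal.prod_const, Cardinal.lift_two,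
          Cardinal.lift_uzero]
      _ ≤ 2 ^ Cardinal.aleph0 :=
        Cardinal.power_le_power_left two_ne_zero (Cardinal.mk_le_aleph0_iff.2 inferInstance)
      _ = Cardinal.continuum := Cardinal.two_power_aleph0
  · let _ := TopologicalSpace.upgradeIsCompletelyMetrizable (Φ → Bool)
    obtain ⟨F, hFC, -, hF⟩ := hC.exists_nat_bool_injection hne
    have hmk := Cardinal.lift_mk_le_lift_mk_of_injective
      (hF.codRestrict fun b => hFC (Set.mem_range_self b))
    simpa using hmk

theorem finite_or_mk_closure_range_eq_continuum [Countable Φ]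
    (hcont : ∀ φ, ∃ U : Subgroup G, U.FiniteIndex ∧ ∀ γ, ∀ ε ∈ U, P (γ * ε) φ = P γ φ)
    (hmul : ∀ δ γ γ', P γ = P γ' → P (δ * γ) = P (δ * γ')) :
    (closure (Set.range P)).Finite ∨ Cardinal.mk (closure (Set.range P)) = Cardinal.continuum := by
  by_cases hfin : (Set.range P).Finite
  · exact Or.inl (by rwa [hfin.isClosed.closure_eq])
  · have hperfect := (preperfect_range_of_infinite hcont hmul hfin).perfect_closure
    exact Or.inr (mk_eq_continuum_of_perfect hperfect (Set.range_nonempty P).closure)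

end Dichotomy

instance : Countable GQ := by
  have : Countable (Matrix (Fin 2) (Fin 2) ℚ) := inferInstanceAs (Countable (Fin 2 → Fin 2 → ℚ))
  have : Countable (GL (Fin 2) ℚ) := Units.val_injective.countable
  have : Countable GL2QPos := Subtype.countable
  exact Quotient.countable

instance : Countable JLang.Symbols := by
  have hfun : Countable (Σ l, JFun l) := by
    let code : (Σ l, JFun l) → GQ ⊕ Fin 5 := fun F => match F with
      | ⟨_, .act g⟩ => Sum.inl g
      | ⟨_, .jmap⟩ => Sum.inr 0
      | ⟨_, .add⟩ => Sum.inr 1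
      | ⟨_, .mul⟩ => Sum.inr 2
      | ⟨_, .zero⟩ => Sum.inr 3
      | ⟨_, .one⟩ => Sum.inr 4
    refine Function.Injective.countable (f := code) ?_
    rintro ⟨_, _ | _⟩ ⟨_, _ | _⟩ h <;> simp_all [code]
  have hrel : Countable (Σ l, JRel l) := by
    have : Subsingleton (Σ l, JRel l) := ⟨by rintro ⟨_, ⟨⟩⟩ ⟨_, ⟨⟩⟩; rfl⟩
    infer_instance
  exact inferInstanceAs (Countable ((Σ l, JFun l) ⊕ (Σ l, JRel l)))

theorem finite_or_mk_closure_range_translateType_eq_continuum {n : ℕ} {τ : Fin n → ℍ}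
    (hτ : IsFree τ) :
    (closure (Set.range (translateType τ))).Finite ∨
      Cardinal.mk (closure (Set.range (translateType τ))) = Cardinal.continuum :=
  finite_or_mk_closure_range_eq_continuum (exists_finiteIndex_translateType_mul_eq hτ)
    fun δ γ γ' h => funext fun φ => by rw [translateType_mul, translateType_mul, h]

end JPaper

open JPaper FirstOrder

/-- Proposition `number types`: for a `G`-independent tuple
`τ̄ ∈ ℍⁿ`, the number of types of tuples `τ̄'`, realisable in models of
`Th(j) + StandardFibres` and satisfying `j'(τ̄') = j(τ̄)`, is either finite or exactly
`2^ℵ₀`. -/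
theorem number_of_types_above_fibre_finite_or_continuum
    (n : ℕ) (τ : Fin n → UpperHalfPlane)
    (hτ : stdModel.GIndependent (show Fin n → stdModel.H from τ)) :
    (typesAboveFibre (fun i => jFunction (τ i))).Finite ∨
      Cardinal.mk ↥(typesAboveFibre (fun i => jFunction (τ i))) = Cardinal.continuum := by
  have hfree : IsFree τ := isFree_of_gIndependent hτ
  have hinj : Function.Injective fun t : JLang.Formula (Fin n) → Bool => {φ | t φ = true} :=
    fun t t' h => funext fun φ => Bool.eq_iff_iff.2 (Set.ext_iff.1 h φ)
  rw [typesAboveFibre_eq_image_closure hfree, Cardinal.mk_image_eq hinj]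
  exact (finite_or_mk_closure_range_translateType_eq_continuum hfree).imp_left fun h => h.image _
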